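/- arXiv:1708.03286 — 13 statements merged into one kernel-verified Lean document; each statement's English description precedes it below -/
import Mathlib

section
/- Let U and V be symmetric positive definite real 3×3 matrices. Then the energy wells SO(3)U and SO(3)V are rank-one connected — i.e. there exist R ∈ SO(3), a nonzero vector a ∈ ℝ³ and a unit vector n ∈ ℝ³ such that RU = V + a⊗n — if and only if there exist unit vectors m, n ∈ ℝ³ and a real number γ ≠ 0 such that U² − V² = γ(m⊗n + n⊗m). -/
/-!
If `F = V + a ⊗ n` with `V` symmetric, then
`FᵀF = V² + Va ⊗ n + n ⊗ Va + |a|² n ⊗ n = V² + w ⊗ n + n ⊗ w` with `w = Va + (|a|²/2) n`,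
and `det F = (1 + a · V⁻¹n) det V`.

Given a rank-one connection `RU = F`, this gives `U² - V² = w ⊗ n + n ⊗ w`, to be normalised by
`γ = |w|`. The vector `w` is nonzero: `w = 0` forces `V⁻¹n = -2a/|a|²`, hence
`det F = -det V < 0`, whereas `det F = det U > 0`.

Conversely, put `p = V⁻¹m`, `k = V⁻¹n` and look for `a = γp - tk`. Then `FᵀF = U²` amounts to
`|a|² = 2t`, a quadratic equation in `t` whose reduced discriminant
`(1 + γ p·k)² - γ²|p|²|k|²` equals `det U² / det V² > 0`. The two roots give
`1 + a·k = ± √discriminant`; the root with the plus sign makes `det F` positive, and then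
`R = F U⁻¹` is a rotation.
-/

open Matrix
/-- A real 3×3 matrix is a rotation (element of SO(3)). -/
def IsSO3 (R : Matrix (Fin 3) (Fin 3) ℝ) : Prop :=
  Rᵀ * R = 1 ∧ R.det = 1

lemma transpose_mul_self_add_vecMulVec (V : Matrix (Fin 3) (Fin 3) ℝ) (a n : Fin 3 → ℝ) :
    (V + vecMulVec a n)ᵀ * (V + vecMulVec a n) =
      Vᵀ * V + vecMulVec (Vᵀ *ᵥ a) n + vecMulVec n (Vᵀ *ᵥ a) + (a ⬝ᵥ a) • vecMulVec n n := by
  ext i j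
  simp [mul_apply, Fin.sum_univ_three, vecMulVec_apply, mulVec, dotProduct]
  ring

lemma det_add_vecMulVec_mulVec (V : Matrix (Fin 3) (Fin 3) ℝ) (a k : Fin 3 → ℝ) :
    (V + vecMulVec a (Vᵀ *ᵥ k)).det = (1 + a ⬝ᵥ k) * V.det := by
  have h : V + vecMulVec a (Vᵀ *ᵥ k) = (1 + vecMulVec a k) * V := by
    rw [add_mul, one_mul, vecMulVec_mul, mulVec_transpose]
  rw [h, det_mul]
  congr 1
  simp [det_fin_three, vecMulVec_apply, dotProduct, Fin.sum_univ_three, one_apply]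
  ring

/-- Up to the factor `det V ^ 2`, the determinant of `VVᵀ + γ(m ⊗ n + n ⊗ m)` with `m = Vp` and
`n = Vk` is the reduced discriminant of the quadratic `|γp - tk|² = 2t` in `t`. -/
lemma det_sq_add_symm_vecMulVec (V : Matrix (Fin 3) (Fin 3) ℝ) (p k : Fin 3 → ℝ) (γ : ℝ) :
    (V * Vᵀ + γ • (vecMulVec (V *ᵥ p) (V *ᵥ k) + vecMulVec (V *ᵥ k) (V *ᵥ p))).det =
      ((1 + γ * (p ⬝ᵥ k)) ^ 2 - γ ^ 2 * (p ⬝ᵥ p) * (k ⬝ᵥ k)) * V.det ^ 2 := by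
  have h : V * Vᵀ + γ • (vecMulVec (V *ᵥ p) (V *ᵥ k) + vecMulVec (V *ᵥ k) (V *ᵥ p)) =
      V * (1 + γ • (vecMulVec p k + vecMulVec k p)) * Vᵀ := by
    simp only [mul_add, add_mul, mul_one, mul_smul_comm, smul_mul_assoc, mul_vecMulVec,
      vecMulVec_mul, vecMul_transpose]
  have hd : (1 + γ • (vecMulVec p k + vecMulVec k p)).det =
      (1 + γ * (p ⬝ᵥ k)) ^ 2 - γ ^ 2 * (p ⬝ᵥ p) * (k ⬝ᵥ k) := by
    simp [det_fin_three, vecMulVec_apply, dotProduct, Fin.sum_univ_three, one_apply]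
    ring
  rw [h, det_mul, det_mul, det_transpose, hd]
  ring

/-- A matrix `F` with positive determinant and `FᵀF = U²` lies in the well `SO(3)U`. -/
lemma exists_isSO3_mul_eq {U F : Matrix (Fin 3) (Fin 3) ℝ} (hU : Uᵀ = U) (hUdet : 0 < U.det)
    (hF : Fᵀ * F = U * U) (hFdet : 0 < F.det) : ∃ R, IsSO3 R ∧ R * U = F := by
  have hu : IsUnit U.det := hUdet.ne'.isUnit
  refine ⟨F * U⁻¹, ⟨?_, ?_⟩, by rw [Matrix.mul_assoc, nonsing_inv_mul _ hu, Matrix.mul_one]⟩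
  · rw [transpose_mul, transpose_nonsing_inv, hU, Matrix.mul_assoc, ← Matrix.mul_assoc Fᵀ, hF,
      Matrix.mul_assoc U, mul_nonsing_inv _ hu, Matrix.mul_one, nonsing_inv_mul _ hu]
  · have h := congrArg det hF
    rw [det_mul, det_mul, det_transpose] at h
    have h' : F.det = U.det := by nlinarith
    rw [det_mul, h', ← det_mul, mul_nonsing_inv _ hu, det_one]

/-- The energy wells SO(3)U and SO(3)V for symmetric positive definite U, V are
rank-one connected iff U² − V² = γ(m⊗n + n⊗m) for unit vectors m, n and some γ ≠ 0. -/
theorem rank_one_connection_iff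
    (U V : Matrix (Fin 3) (Fin 3) ℝ)
    (hUsymm : U.IsSymm) (hUpos : U.PosDef)
    (hVsymm : V.IsSymm) (hVpos : V.PosDef) :
    (∃ (R : Matrix (Fin 3) (Fin 3) ℝ) (a n : Fin 3 → ℝ),
        IsSO3 R ∧ a ≠ 0 ∧ n ⬝ᵥ n = 1 ∧
        R * U = V + Matrix.vecMulVec a n) ↔
    (∃ (m n : Fin 3 → ℝ) (γ : ℝ),
        m ⬝ᵥ m = 1 ∧ n ⬝ᵥ n = 1 ∧ γ ≠ 0 ∧
        U * U - V * V = γ • (Matrix.vecMulVec m n + Matrix.vecMulVec n m)) := by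
  have hUt : Uᵀ = U := hUsymm
  have hVt : Vᵀ = V := hVsymm
  have hUdet := hUpos.det_pos
  have hVdet := hVpos.det_pos
  have hv : IsUnit V.det := hVdet.ne'.isUnit
  constructor
  · rintro ⟨R, a, n, ⟨hR, hRdet⟩, ha, hn, h⟩
    have haa : 0 < a ⬝ᵥ a := by simpa using dotProduct_star_self_pos_iff.mpr ha
    have hUU : U * U = (V + vecMulVec a n)ᵀ * (V + vecMulVec a n) := by
      rw [← h, transpose_mul, hUt, Matrix.mul_assoc, ← Matrix.mul_assoc Rᵀ, hR, Matrix.one_mul]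
    rw [transpose_mul_self_add_vecMulVec, hVt] at hUU
    obtain ⟨w, hw⟩ : ∃ w, w = V *ᵥ a + ((a ⬝ᵥ a) / 2) • n := ⟨_, rfl⟩
    have hdiff : U * U - V * V = vecMulVec w n + vecMulVec n w := by
      rw [hUU, hw]
      ext i j
      simp [vecMulVec_apply]
      ring
    have hw0 : w ≠ 0 := by
      intro h0
      have hnV : n = Vᵀ *ᵥ ((-2 / (a ⬝ᵥ a)) • a) := by
        rw [hVt, mulVec_smul]
        ext i
        have := congrFun (hw.symm.trans h0) i
        simp only [Pi.add_apply, Pi.smul_apply, smul_eq_mul, Pi.zero_apply] at this ⊢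
        field_simp
        linarith
      have hd := congrArg det h
      rw [hnV, det_add_vecMulVec_mulVec, det_mul, hRdet, dotProduct_smul, smul_eq_mul,
        div_mul_cancel₀ _ haa.ne'] at hd
      linarith
    have hww : 0 < w ⬝ᵥ w := by simpa using dotProduct_star_self_pos_iff.mpr hw0
    have hs := Real.sqrt_pos.mpr hww
    refine ⟨(√(w ⬝ᵥ w))⁻¹ • w, n, √(w ⬝ᵥ w), ?_, hn, hs.ne', ?_⟩
    · rw [smul_dotProduct, dotProduct_smul, smul_eq_mul, smul_eq_mul, ← mul_assoc, ← mul_inv,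
        Real.mul_self_sqrt hww.le, inv_mul_cancel₀ hww.ne']
    · rw [hdiff, smul_vecMulVec, vecMulVec_smul, ← smul_add, smul_smul, mul_inv_cancel₀ hs.ne',
        one_smul]
  · rintro ⟨m, n, γ, hm, hn, hγ, h⟩
    obtain ⟨p, rfl⟩ : ∃ p, m = V *ᵥ p :=
      ⟨V⁻¹ *ᵥ m, by rw [mulVec_mulVec, mul_nonsing_inv _ hv, one_mulVec]⟩
    obtain ⟨k, rfl⟩ : ∃ k, n = V *ᵥ k :=
      ⟨V⁻¹ *ᵥ n, by rw [mulVec_mulVec, mul_nonsing_inv _ hv, one_mulVec]⟩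
    have hk : k ≠ 0 := by
      rintro rfl
      simp at hn
    have hkk : 0 < k ⬝ᵥ k := by simpa using dotProduct_star_self_pos_iff.mpr hk
    obtain ⟨D, hD⟩ : ∃ D, D = (1 + γ * (p ⬝ᵥ k)) ^ 2 - γ ^ 2 * (p ⬝ᵥ p) * (k ⬝ᵥ k) := ⟨_, rfl⟩
    have hDpos : 0 < D := by
      have hd := det_sq_add_symm_vecMulVec V p k γ
      rw [hVt, ← h, add_sub_cancel, det_mul, ← hD] at hd
      have : 0 < D * V.det ^ 2 := hd ▸ mul_pos hUdet hUdet
      exact pos_of_mul_pos_left this (sq_nonneg _)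
    have hs := Real.sqrt_pos.mpr hDpos
    have hsq := Real.sq_sqrt hDpos.le
    obtain ⟨t, ht⟩ : ∃ t, t = (1 + γ * (p ⬝ᵥ k) - √D) / (k ⬝ᵥ k) := ⟨_, rfl⟩
    have htk : t * (k ⬝ᵥ k) = 1 + γ * (p ⬝ᵥ k) - √D := by
      rw [ht, div_mul_cancel₀ _ hkk.ne']
    obtain ⟨a, ha⟩ : ∃ a, a = γ • p - t • k := ⟨_, rfl⟩
    have hak : 1 + a ⬝ᵥ k = √D := by
      rw [ha, sub_dotProduct, smul_dotProduct, smul_dotProduct, smul_eq_mul, smul_eq_mul]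
      linarith
    have haa : a ⬝ᵥ a = 2 * t := by
      have e : a ⬝ᵥ a = γ ^ 2 * (p ⬝ᵥ p) - 2 * t * γ * (p ⬝ᵥ k) + t ^ 2 * (k ⬝ᵥ k) := by
        rw [ha]
        simp only [dotProduct, Fin.sum_univ_three, Pi.sub_apply, Pi.smul_apply, smul_eq_mul]
        ring
      have hr : √D = 1 + γ * (p ⬝ᵥ k) - t * (k ⬝ᵥ k) := by linarith
      rw [hr, hD] at hsq
      apply mul_right_cancel₀ hkk.ne'
      rw [e]
      linear_combination hsq
    have ha0 : a ≠ 0 := by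
      intro h0
      -- `a = 0` gives `t = |a|² / 2 = 0`, hence `γp = 0`.
      have ht0 : t = 0 := by
        rw [h0, dotProduct_zero] at haa
        linarith
      rw [h0, ht0, zero_smul, sub_zero] at ha
      have hp : p = 0 := (smul_eq_zero.mp ha.symm).resolve_left hγ
      simp [hp] at hm
    have hFF : (V + vecMulVec a (V *ᵥ k))ᵀ * (V + vecMulVec a (V *ᵥ k)) = U * U := by
      rw [transpose_mul_self_add_vecMulVec, hVt, haa, eq_add_of_sub_eq h, ha, mulVec_sub,
        mulVec_smul, mulVec_smul]
      ext i j
      simp [vecMulVec_apply]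
      ring
    have hFdet : 0 < (V + vecMulVec a (V *ᵥ k)).det := by
      have := det_add_vecMulVec_mulVec V a k
      rw [hVt, hak] at this
      rw [this]
      positivity
    obtain ⟨R, hR, hRU⟩ := exists_isSO3_mul_eq hUt hUdet hFF hFdet
    exact ⟨R, a, V *ᵥ k, hR, ha0, hn, hRU⟩
end

section
/- Let U and V be symmetric positive definite real 3×3 matrices, and suppose U² − V² = γ(m⊗n + n⊗m) for unit vectors m, n ∈ ℝ³ and some real γ ≠ 0. Then: (i) there exist R₁, R₂ ∈ SO(3) and nonzero vectors a₁, a₂ ∈ ℝ³ such that R₁U = V + a₁⊗n and R₂U = V + a₂⊗m; and (ii) for any R ∈ SO(3), nonzero a ∈ ℝ³ and unit vector ν ∈ ℝ³ with RU = V + a⊗ν, one has ν = n, ν = −n, ν = m, or ν = −m. -/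
/-!
A matrix `F = V + a ⊗ n` has the form `R U` with `R ∈ SO(3)` as soon as `Fᵀ F = U²` and
`det F = det U`. Writing `p = V⁻¹ m` and `q = V⁻¹ n`, the first condition follows from
`V a = γ m - (|a|² / 2) n`, that is, `a = γ p - (t / 2) q` with `t = |a|²`, a quadratic equation
for `t`. In terms of `s = 1 + a · q = det F / det V` that equation reads
`s² = (1 + γ p · q)² - γ² |p|² |q|²`, whose right-hand side is
`det (1 + γ (p ⊗ q + q ⊗ p)) = (det U / det V)²`. Hence `s = det U / det V` is a solution, and it
is the one with `det F = det U`. Exchanging `m` and `n` gives the second connection.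

Conversely, if `R U = V + a ⊗ ν`, then `|U x| = |V x|` for all `x ⟂ ν`, so `(m · x) (n · x) = 0` on
the plane `ν^⟂`. A product of two linear forms vanishes on a plane only if one of them does, so
`m` or `n` is parallel to `ν`.
-/

open Matrix

/-- The determinant of a symmetrised rank-two perturbation of the identity. -/
lemma det_one_add_symm (p q : Fin 3 → ℝ) (γ : ℝ) :
    (1 + γ • (vecMulVec p q + vecMulVec q p)).det
      = (1 + γ * (p ⬝ᵥ q)) ^ 2 - γ ^ 2 * (p ⬝ᵥ p) * (q ⬝ᵥ q) := by
  simp [det_fin_three, vecMulVec_apply, dotProduct, Fin.sum_univ_three]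
  ring

lemma det_one_add_vecMulVec_fin_three (a q : Fin 3 → ℝ) :
    (1 + vecMulVec a q).det = 1 + a ⬝ᵥ q := by
  simp [det_fin_three, vecMulVec_apply, dotProduct, Fin.sum_univ_three]
  ring

/-- The Gram matrix of a rank-one perturbation of a symmetric matrix. -/
lemma gram_add_vecMulVec (V : Matrix (Fin 3) (Fin 3) ℝ) (hV : V.IsSymm) (a n : Fin 3 → ℝ) :
    (V + vecMulVec a n)ᵀ * (V + vecMulVec a n)
      = V * V + vecMulVec (V *ᵥ a) n + vecMulVec n (V *ᵥ a)
        + (a ⬝ᵥ a) • vecMulVec n n := by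
  have h : a ᵥ* V = V *ᵥ a := by
    rw [← mulVec_transpose, hV.eq]
  rw [transpose_add, hV.eq, transpose_vecMulVec, add_mul, mul_add, mul_add, mul_vecMulVec,
    vecMulVec_mul, h, vecMulVec_mul_vecMulVec, vecMulVec_smul]
  abel

/-- The matrix `m ⊗ n + n ⊗ m` is nonzero for unit vectors `m` and `n`. -/
lemma symm_vecMulVec_ne_zero (m n : Fin 3 → ℝ) (hm : m ⬝ᵥ m = 1) (hn : n ⬝ᵥ n = 1) :
    vecMulVec m n + vecMulVec n m ≠ 0 := by
  intro h
  -- The associated bilinear form takes the values `2 (m · n)` and `1 + (m · n)²` at `(n, n)` and `(m, n)`.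
  have h1 : (vecMulVec m n + vecMulVec n m) *ᵥ n = 0 := by rw [h, zero_mulVec]
  rw [add_mulVec, vecMulVec_mulVec, vecMulVec_mulVec] at h1
  have h2 := congrArg (fun v => n ⬝ᵥ v) h1
  have h3 := congrArg (fun v => m ⬝ᵥ v) h1
  simp [hm, hn, dotProduct_comm n m] at h2 h3
  nlinarith

/-- Existence of a rank-one connection with normal `n`. -/
lemma exists_connection (U V : Matrix (Fin 3) (Fin 3) ℝ)
    (hUsymm : U.IsSymm) (hUpos : U.PosDef) (hVsymm : V.IsSymm) (hVpos : V.PosDef)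
    (m n : Fin 3 → ℝ) (γ : ℝ) (hm : m ⬝ᵥ m = 1) (hn : n ⬝ᵥ n = 1) (hγ : γ ≠ 0)
    (heq : U * U - V * V = γ • (vecMulVec m n + vecMulVec n m)) :
    ∃ (R : Matrix (Fin 3) (Fin 3) ℝ) (a : Fin 3 → ℝ),
      IsSO3 R ∧ a ≠ 0 ∧ R * U = V + vecMulVec a n := by
  have hdU : 0 < U.det := hUpos.det_pos
  have hdV : 0 < V.det := hVpos.det_pos
  have hUu : IsUnit U.det := hdU.ne'.isUnit
  have hVu : IsUnit V.det := hdV.ne'.isUnit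
  obtain ⟨p, hp⟩ : ∃ p, V *ᵥ p = m :=
    ⟨V⁻¹ *ᵥ m, by rw [mulVec_mulVec, mul_nonsing_inv _ hVu, one_mulVec]⟩
  obtain ⟨q, hq⟩ : ∃ q, V *ᵥ q = n :=
    ⟨V⁻¹ *ᵥ n, by rw [mulVec_mulVec, mul_nonsing_inv _ hVu, one_mulVec]⟩
  have hvec : ∀ x, x ᵥ* V = V *ᵥ x := fun x => by rw [← mulVec_transpose, hVsymm.eq]
  have hUU : U * U = V * V + γ • (vecMulVec m n + vecMulVec n m) := by
    rw [← heq]; abel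
  have hfac : U * U = V * (1 + γ • (vecMulVec p q + vecMulVec q p)) * V := by
    rw [hUU, mul_add, add_mul, mul_one, mul_smul_comm, smul_mul_assoc, mul_add, add_mul,
      mul_vecMulVec, mul_vecMulVec, vecMulVec_mul, vecMulVec_mul, hvec, hvec, hp, hq]
  have hdet := congrArg Matrix.det hfac
  rw [det_mul, det_mul, det_mul, det_one_add_symm] at hdet
  have hq0 : 0 < q ⬝ᵥ q := by
    have h0 : q ≠ 0 := by
      rintro rfl
      rw [mulVec_zero] at hq
      rw [← hq] at hn
      simp at hn
    exact lt_of_le_of_ne (by simpa using dotProduct_star_self_nonneg q)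
      (fun h => h0 (dotProduct_self_eq_zero.mp h.symm))
  obtain ⟨s, hs⟩ : ∃ s, s = U.det / V.det := ⟨_, rfl⟩
  have hsV : V.det * s = U.det := by rw [hs]; field_simp
  have hs2 : s ^ 2 = (1 + γ * (p ⬝ᵥ q)) ^ 2 - γ ^ 2 * (p ⬝ᵥ p) * (q ⬝ᵥ q) := by
    rw [← hsV] at hdet
    have : V.det ^ 2 ≠ 0 := by positivity
    apply mul_left_cancel₀ this
    linear_combination hdet
  obtain ⟨t, ht⟩ : ∃ t, t = 2 * (1 + γ * (p ⬝ᵥ q) - s) / (q ⬝ᵥ q) := ⟨_, rfl⟩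
  have htq : t * (q ⬝ᵥ q) = 2 * (1 + γ * (p ⬝ᵥ q) - s) := by rw [ht]; field_simp
  obtain ⟨a, ha⟩ : ∃ a, a = γ • p - (t / 2) • q := ⟨_, rfl⟩
  have haq : 1 + a ⬝ᵥ q = s := by
    rw [ha, sub_dotProduct, smul_dotProduct, smul_dotProduct, smul_eq_mul, smul_eq_mul]
    linear_combination - htq / 2
  have haa : a ⬝ᵥ a = t := by
    have h : a ⬝ᵥ a = γ ^ 2 * (p ⬝ᵥ p) - γ * t * (p ⬝ᵥ q) + t ^ 2 / 4 * (q ⬝ᵥ q) := by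
      rw [ha]
      simp only [dotProduct, Fin.sum_univ_three, Pi.sub_apply, Pi.smul_apply, smul_eq_mul]
      ring
    rw [h]
    apply mul_right_cancel₀ hq0.ne'
    linear_combination hs2 + (t * (q ⬝ᵥ q) / 4 - (1 + γ * (p ⬝ᵥ q)) / 2 - s / 2) * htq
  have hVa : V *ᵥ a = γ • m - (t / 2) • n := by
    rw [ha, mulVec_sub, mulVec_smul, mulVec_smul, hp, hq]
  have hF : (V + vecMulVec a n)ᵀ * (V + vecMulVec a n) = U * U := by
    rw [gram_add_vecMulVec V hVsymm, hVa, haa, hUU]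
    ext i j
    simp [vecMulVec_apply]
    ring
  have hdF : (V + vecMulVec a n).det = U.det := by
    have h : V + vecMulVec a n = (1 + vecMulVec a q) * V := by
      rw [add_mul, one_mul, vecMulVec_mul, hvec, hq]
    rw [h, det_mul, det_one_add_vecMulVec_fin_three, haq, mul_comm, hsV]
  refine ⟨(V + vecMulVec a n) * U⁻¹, a, ⟨?_, ?_⟩, ?_, ?_⟩
  · rw [transpose_mul, transpose_nonsing_inv, hUsymm.eq, Matrix.mul_assoc,
      ← Matrix.mul_assoc _ _ U⁻¹, hF, Matrix.mul_assoc, mul_nonsing_inv _ hUu, mul_one,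
      nonsing_inv_mul _ hUu]
  · rw [det_mul, hdF, ← det_mul, mul_nonsing_inv _ hUu, det_one]
  · rintro rfl
    rw [zero_vecMulVec, add_zero, hVsymm.eq] at hF
    rw [hF, sub_self] at heq
    exact symm_vecMulVec_ne_zero m n hm hn ((smul_eq_zero.mp heq.symm).resolve_left hγ)
  · rw [Matrix.mul_assoc, nonsing_inv_mul _ hUu, mul_one]

/-- A unit vector whose component orthogonal to `ν` vanishes is `± ν`. -/
lemma eq_or_neg_of_sub_eq_zero (m ν : Fin 3 → ℝ) (hm : m ⬝ᵥ m = 1) (hν : ν ⬝ᵥ ν = 1)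
    (h : m - (m ⬝ᵥ ν) • ν = 0) : ν = m ∨ ν = -m := by
  have h1 : m = (m ⬝ᵥ ν) • ν := sub_eq_zero.mp h
  generalize m ⬝ᵥ ν = c at h1
  subst h1
  have hc : c * c = 1 := by simpa [hν] using hm
  rcases mul_self_eq_one_iff.mp hc with rfl | rfl <;> simp

/-- If the product of the linear forms `m` and `n` vanishes on the plane `ν^⟂`, then `m` or `n`
is parallel to `ν`. -/
lemma proj_eq_zero_or (m n ν : Fin 3 → ℝ) (hν : ν ⬝ᵥ ν = 1)
    (h : ∀ x, ν ⬝ᵥ x = 0 → (m ⬝ᵥ x) * (n ⬝ᵥ x) = 0) :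
    m - (m ⬝ᵥ ν) • ν = 0 ∨ n - (n ⬝ᵥ ν) • ν = 0 := by
  obtain ⟨m', hm'⟩ : ∃ m', m' = m - (m ⬝ᵥ ν) • ν := ⟨_, rfl⟩
  obtain ⟨n', hn'⟩ : ∃ n', n' = n - (n ⬝ᵥ ν) • ν := ⟨_, rfl⟩
  rw [← hm', ← hn']
  have hνm : ν ⬝ᵥ m' = 0 := by simp [hm', hν, dotProduct_comm ν m]
  have hνn : ν ⬝ᵥ n' = 0 := by simp [hn', hν, dotProduct_comm ν n]
  have hmx : ∀ x, ν ⬝ᵥ x = 0 → m ⬝ᵥ x = m' ⬝ᵥ x := fun x hx => by simp [hm', hx]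
  have hnx : ∀ x, ν ⬝ᵥ x = 0 → n ⬝ᵥ x = n' ⬝ᵥ x := fun x hx => by simp [hn', hx]
  have key : ∀ x, ν ⬝ᵥ x = 0 → (m' ⬝ᵥ x) * (n' ⬝ᵥ x) = 0 := fun x hx => by
    rw [← hmx x hx, ← hnx x hx, h x hx]
  -- If `m'` and `n'` are both nonzero, testing with each shows that they are orthogonal, and
  -- then testing with `m' + n'` gives a contradiction.
  have h1 := key m' hνm
  have h3 := key (m' + n') (by rw [dotProduct_add, hνm, hνn, add_zero])
  rw [mul_eq_zero, dotProduct_self_eq_zero] at h1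
  rcases h1 with h1 | h1
  · exact Or.inl h1
  · rw [dotProduct_add, dotProduct_add, dotProduct_comm m' n', h1, add_zero, zero_add,
      mul_eq_zero, dotProduct_self_eq_zero, dotProduct_self_eq_zero] at h3
    exact h3

/-- The normal `ν` of a rank-one connection satisfies `(m · x) (n · x) = 0` for all `x ⟂ ν`:
there `|R U x| = |U x|` and `(V + a ⊗ ν) x = V x`. -/
lemma mul_eq_zero_of_connection (U V : Matrix (Fin 3) (Fin 3) ℝ)
    (hUsymm : U.IsSymm) (hVsymm : V.IsSymm) (m n : Fin 3 → ℝ) (γ : ℝ) (hγ : γ ≠ 0)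
    (heq : U * U - V * V = γ • (vecMulVec m n + vecMulVec n m))
    (R : Matrix (Fin 3) (Fin 3) ℝ) (a ν : Fin 3 → ℝ) (hR : Rᵀ * R = 1)
    (h : R * U = V + vecMulVec a ν) (x : Fin 3 → ℝ) (hx : ν ⬝ᵥ x = 0) :
    (m ⬝ᵥ x) * (n ⬝ᵥ x) = 0 := by
  have h1 : U * U = V * V + vecMulVec (V *ᵥ a) ν + vecMulVec ν (V *ᵥ a)
      + (a ⬝ᵥ a) • vecMulVec ν ν := by
    rw [← gram_add_vecMulVec V hVsymm, ← h, transpose_mul, hUsymm.eq, Matrix.mul_assoc,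
      ← Matrix.mul_assoc _ R, hR, one_mul]
  have h2 : γ • (vecMulVec m n + vecMulVec n m)
      = vecMulVec (V *ᵥ a) ν + vecMulVec ν (V *ᵥ a) + (a ⬝ᵥ a) • vecMulVec ν ν := by
    rw [← heq, h1]; abel
  have h3 := congrArg (fun M => x ⬝ᵥ (M *ᵥ x)) h2
  simp [add_mulVec, smul_mulVec, vecMulVec_mulVec, hx, dotProduct_comm x ν,
    dotProduct_comm x m, dotProduct_comm x n] at h3
  apply mul_left_cancel₀ hγ
  linear_combination h3 / 2

/-- If U² − V² = γ(m⊗n + n⊗m) for unit vectors m, n and γ ≠ 0, then (i) there are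
rank-one connections between V and SO(3)U with normals n and m, and (ii) every
rank-one connection between V and SO(3)U has normal ±n or ±m. -/
theorem rank_one_connections_normals
    (U V : Matrix (Fin 3) (Fin 3) ℝ)
    (hUsymm : U.IsSymm) (hUpos : U.PosDef)
    (hVsymm : V.IsSymm) (hVpos : V.PosDef)
    (m n : Fin 3 → ℝ) (γ : ℝ)
    (hm : m ⬝ᵥ m = 1) (hn : n ⬝ᵥ n = 1) (hγ : γ ≠ 0)
    (heq : U * U - V * V = γ • (Matrix.vecMulVec m n + Matrix.vecMulVec n m)) :
    (∃ (R₁ R₂ : Matrix (Fin 3) (Fin 3) ℝ) (a₁ a₂ : Fin 3 → ℝ),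
        IsSO3 R₁ ∧ IsSO3 R₂ ∧ a₁ ≠ 0 ∧ a₂ ≠ 0 ∧
        R₁ * U = V + Matrix.vecMulVec a₁ n ∧
        R₂ * U = V + Matrix.vecMulVec a₂ m) ∧
    (∀ (R : Matrix (Fin 3) (Fin 3) ℝ) (a ν : Fin 3 → ℝ),
        IsSO3 R → a ≠ 0 → ν ⬝ᵥ ν = 1 →
        R * U = V + Matrix.vecMulVec a ν →
        ν = n ∨ ν = -n ∨ ν = m ∨ ν = -m) := by
  constructor
  · obtain ⟨R₁, a₁, hR₁, ha₁, h₁⟩ :=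
      exists_connection U V hUsymm hUpos hVsymm hVpos m n γ hm hn hγ heq
    obtain ⟨R₂, a₂, hR₂, ha₂, h₂⟩ :=
      exists_connection U V hUsymm hUpos hVsymm hVpos n m γ hn hm hγ
        (by rw [heq, add_comm (vecMulVec m n)])
    exact ⟨R₁, R₂, a₁, a₂, hR₁, hR₂, ha₁, ha₂, h₁, h₂⟩
  · intro R a ν hR _ hν h
    rcases proj_eq_zero_or m n ν hν
      (mul_eq_zero_of_connection U V hUsymm hVsymm m n γ hγ heq R a ν hR.1 h) with h0 | h0
    · rcases eq_or_neg_of_sub_eq_zero m ν hm hν h0 with h1 | h1 <;> simp [h1]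
    · rcases eq_or_neg_of_sub_eq_zero n ν hn hν h0 with h1 | h1 <;> simp [h1]
end

section
/- Let U be a symmetric positive definite real 3×3 matrix, Q ∈ SO(3), and set V = QᵀUQ. If U² − V² = γ(m⊗n + n⊗m) for unit vectors m, n ∈ ℝ³ and some real γ ≠ 0, then m and n are orthogonal, i.e. m·n = 0. -/
/-!
The argument compares traces. Since `V` is conjugate to `U` by an orthogonal matrix, `V ^ 2` and
`U ^ 2` have equal trace, so the left side of the hypothesis on `U ^ 2 - V ^ 2` has trace zero.
The right side has trace `2 * γ * (m ⬝ᵥ n)`, and `γ ≠ 0`.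
-/

open Matrix

/-- If U is symmetric positive definite, Q ∈ SO(3), V = QᵀUQ, and
U² − V² = γ(m⊗n + n⊗m) for unit vectors m, n and γ ≠ 0, then m·n = 0. -/
theorem normals_orthogonal_for_variants
    (U Q V : Matrix (Fin 3) (Fin 3) ℝ)
    (hUsymm : U.IsSymm) (hUpos : U.PosDef)
    (hQ : IsSO3 Q) (hV : V = Qᵀ * U * Q)
    (m n : Fin 3 → ℝ) (γ : ℝ)
    (hm : m ⬝ᵥ m = 1) (hn : n ⬝ᵥ n = 1) (hγ : γ ≠ 0)
    (heq : U * U - V * V = γ • (Matrix.vecMulVec m n + Matrix.vecMulVec n m)) :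
    m ⬝ᵥ n = 0 := by
  have hQQ : Q * Qᵀ = 1 := mul_eq_one_comm.mp hQ.1
  have hVV : V * V = Qᵀ * (U * U * Q) := by
    calc V * V = Qᵀ * U * (Q * Qᵀ) * (U * Q) := by rw [hV]; simp only [Matrix.mul_assoc]
      _ = Qᵀ * (U * U * Q) := by rw [hQQ]; simp only [Matrix.mul_assoc, Matrix.one_mul]
  -- Cyclicity of the trace: `V ^ 2` is an orthogonal conjugate of `U ^ 2`.
  have htr : (V * V).trace = (U * U).trace := by
    rw [hVV, Matrix.trace_mul_comm, Matrix.mul_assoc, hQQ, Matrix.mul_one]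
  have h := congrArg Matrix.trace heq
  rw [Matrix.trace_sub, htr, sub_self, Matrix.trace_smul, Matrix.trace_add,
    Matrix.trace_vecMulVec, Matrix.trace_vecMulVec, dotProduct_comm n m, smul_eq_mul] at h
  have h2 := (mul_eq_zero.mp h.symm).resolve_left hγ
  linarith
end

section
/- Let η₂ > η₁ > 0 and η₃ > 0, and let K = SO(3)U₁ ∪ SO(3)U₂. For α ∈ ℝ, the set equality K·R_α = K holds if and only if α = nπ/2 for some integer n. -/
/-!
Membership in `K` is controlled by the Cauchy–Green matrix: `A ∈ K` forces `Aᵀ A ∈ {U₁², U₂²}`,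
which is diagonal. For `A = U₁ R_α` the `(0, 1)` entry of `Aᵀ A` is `(η₁² - η₂²) sin α cos α`, so
`K R_α = K` forces `sin 2α = 0`, i.e. `α ∈ (π/2) ℤ`. Conversely, if `sin α cos α = 0`, then
`U_i R_α = R_α U_j` for some `j` (`j = i` when `sin α = 0`, the other index when `cos α = 0`), so
right multiplication by `R_α` maps `K` into itself; the same holds for `R_{-α} = R_α⁻¹`, which
gives equality.
-/

open Matrix

/-- Rotation through angle α about e₃. -/
noncomputable def rotZ (α : ℝ) : Matrix (Fin 3) (Fin 3) ℝ :=
  !![Real.cos α, -Real.sin α, 0; Real.sin α, Real.cos α, 0; 0, 0, 1]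

/-- The set of energy wells K = SO(3)U₁ ∪ SO(3)U₂. -/
def wellsK (η₁ η₂ η₃ : ℝ) : Set (Matrix (Fin 3) (Fin 3) ℝ) :=
  {A | ∃ R : Matrix (Fin 3) (Fin 3) ℝ, IsSO3 R ∧
    (A = R * Matrix.diagonal ![η₂, η₁, η₃] ∨ A = R * Matrix.diagonal ![η₁, η₂, η₃])}

theorem isSO3_rotZ (α : ℝ) : IsSO3 (rotZ α) := by
  have h := Real.sin_sq_add_cos_sq α
  constructor
  · ext i j
    fin_cases i <;> fin_cases j <;>
      simp [rotZ, Matrix.mul_apply, Fin.sum_univ_three] <;> linarith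
  · simp [rotZ, Matrix.det_fin_three]
    linarith

theorem IsSO3.mul {R S : Matrix (Fin 3) (Fin 3) ℝ} (hR : IsSO3 R) (hS : IsSO3 S) :
    IsSO3 (R * S) := by
  refine ⟨?_, by rw [Matrix.det_mul, hR.2, hS.2, one_mul]⟩
  rw [Matrix.transpose_mul, Matrix.mul_assoc, ← Matrix.mul_assoc Rᵀ, hR.1, Matrix.one_mul, hS.1]

theorem rotZ_neg_mul (α : ℝ) : rotZ (-α) * rotZ α = 1 := by
  have h : rotZ (-α) = (rotZ α)ᵀ := by
    ext i j
    fin_cases i <;> fin_cases j <;> simp [rotZ]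
  rw [h, (isSO3_rotZ α).1]

theorem diagonal_mul_rotZ_of_sin {α : ℝ} (h : Real.sin α = 0) (a b c : ℝ) :
    diagonal ![a, b, c] * rotZ α = rotZ α * diagonal ![a, b, c] := by
  ext i j
  fin_cases i <;> fin_cases j <;> simp [rotZ, h, mul_comm]

theorem diagonal_mul_rotZ_of_cos {α : ℝ} (h : Real.cos α = 0) (a b c : ℝ) :
    diagonal ![a, b, c] * rotZ α = rotZ α * diagonal ![b, a, c] := by
  ext i j
  fin_cases i <;> fin_cases j <;> simp [rotZ, h, mul_comm]

theorem mul_rotZ_mem_wellsK {η₁ η₂ η₃ α : ℝ} (h : Real.sin α * Real.cos α = 0)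
    {A : Matrix (Fin 3) (Fin 3) ℝ} (hA : A ∈ wellsK η₁ η₂ η₃) :
    A * rotZ α ∈ wellsK η₁ η₂ η₃ := by
  obtain ⟨R, hR, hA⟩ := hA
  refine ⟨R * rotZ α, hR.mul (isSO3_rotZ α), ?_⟩
  rcases mul_eq_zero.1 h with h | h
  · rcases hA with rfl | rfl
    · left
      rw [Matrix.mul_assoc, diagonal_mul_rotZ_of_sin h, Matrix.mul_assoc]
    · right
      rw [Matrix.mul_assoc, diagonal_mul_rotZ_of_sin h, Matrix.mul_assoc]
  · rcases hA with rfl | rfl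
    · right
      rw [Matrix.mul_assoc, diagonal_mul_rotZ_of_cos h, Matrix.mul_assoc]
    · left
      rw [Matrix.mul_assoc, diagonal_mul_rotZ_of_cos h, Matrix.mul_assoc]

/-- The Cauchy–Green matrix `Aᵀ A` of an element of `K` is `U₁²` or `U₂²`, hence diagonal. -/
theorem transpose_mul_self_apply_of_mem_wellsK {η₁ η₂ η₃ : ℝ} {A : Matrix (Fin 3) (Fin 3) ℝ}
    (hA : A ∈ wellsK η₁ η₂ η₃) : (Aᵀ * A) 0 1 = 0 := by
  have key : ∀ (R : Matrix (Fin 3) (Fin 3) ℝ) (d : Fin 3 → ℝ), IsSO3 R →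
      ((R * diagonal d)ᵀ * (R * diagonal d)) 0 1 = 0 := by
    intro R d hR
    rw [Matrix.transpose_mul, Matrix.mul_assoc, ← Matrix.mul_assoc Rᵀ, hR.1, Matrix.one_mul]
    simp
  obtain ⟨R, hR, rfl | rfl⟩ := hA
  · exact key R _ hR
  · exact key R _ hR

/-- K·R_α = K if and only if α is an integer multiple of π/2. -/
theorem wellsK_rot_eq_iff (η₁ η₂ η₃ : ℝ) (h1 : 0 < η₁) (h2 : η₁ < η₂) (h3 : 0 < η₃)
    (α : ℝ) :
    (fun A => A * rotZ α) '' wellsK η₁ η₂ η₃ = wellsK η₁ η₂ η₃ ↔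
      ∃ n : ℤ, α = n * (Real.pi / 2) := by
  have hiff : Real.sin α * Real.cos α = 0 ↔ ∃ n : ℤ, α = n * (Real.pi / 2) := by
    have h : Real.sin α * Real.cos α = 0 ↔ Real.sin (2 * α) = 0 := by
      rw [Real.sin_two_mul, mul_assoc]
      simp
    rw [h, Real.sin_eq_zero_iff]
    refine exists_congr fun n => ⟨fun h => by linarith, fun h => by linarith⟩
  rw [← hiff]
  constructor
  · intro h
    have hU : diagonal ![η₂, η₁, η₃] ∈ wellsK η₁ η₂ η₃ :=
      ⟨1, ⟨by simp, by simp⟩, Or.inl (by simp)⟩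
    have hmem : diagonal ![η₂, η₁, η₃] * rotZ α ∈ wellsK η₁ η₂ η₃ :=
      h ▸ Set.mem_image_of_mem (fun A => A * rotZ α) hU
    have h0 := transpose_mul_self_apply_of_mem_wellsK hmem
    simp [rotZ, Matrix.mul_apply, Fin.sum_univ_three, Matrix.diagonal_apply] at h0
    have hne : η₁ ^ 2 - η₂ ^ 2 ≠ 0 := by nlinarith
    refine (mul_eq_zero.1 (?_ : (η₁ ^ 2 - η₂ ^ 2) * (Real.sin α * Real.cos α) = 0)).resolve_left hne
    linear_combination h0
  · intro h
    apply Set.Subset.antisymm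
    · rintro _ ⟨A, hA, rfl⟩
      exact mul_rotZ_mem_wellsK h hA
    · intro A hA
      have h' : Real.sin (-α) * Real.cos (-α) = 0 := by
        rw [Real.sin_neg, Real.cos_neg, neg_mul, h, neg_zero]
      refine ⟨A * rotZ (-α), mul_rotZ_mem_wellsK h' hA, ?_⟩
      simp only [Matrix.mul_assoc, rotZ_neg_mul, Matrix.mul_one]
end

section
/- Let η₂ > η₁ > 0, η₃ > 0 and α ∈ ℝ. Then U₁² − R_αᵀ U₁² R_α = (η₂² − η₁²) sin α · (m⊗n + n⊗m), where n = (sin(α/2), cos(α/2), 0) and m = (cos(α/2), −sin(α/2), 0). -/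
/-!
With `d = η₂² - η₁²`, `s = sin α` and `c = cos α`, the upper left 2×2 block of the left-hand side
is `d * s * !![s, c; c, -s]` (using `s² + c² = 1` on the diagonal), and its other entries vanish.
The double-angle formulas identify `!![s, c; c, -s]` with the corresponding block of
`m ⊗ n + n ⊗ m`.
-/

open Matrix

/-- U₁² − R_αᵀ U₁² R_α = (η₂² − η₁²) sin α (m⊗n + n⊗m)
with n = (sin(α/2), cos(α/2), 0) and m = (cos(α/2), −sin(α/2), 0). -/
theorem well_difference_variant_one (η₁ η₂ η₃ : ℝ) (h1 : 0 < η₁) (h2 : η₁ < η₂)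
    (h3 : 0 < η₃) (α : ℝ) :
    let U₁ : Matrix (Fin 3) (Fin 3) ℝ := Matrix.diagonal ![η₂, η₁, η₃]
    let n : Fin 3 → ℝ := ![Real.sin (α / 2), Real.cos (α / 2), 0]
    let m : Fin 3 → ℝ := ![Real.cos (α / 2), -Real.sin (α / 2), 0]
    U₁ * U₁ - (rotZ α)ᵀ * (U₁ * U₁) * rotZ α =
      ((η₂ ^ 2 - η₁ ^ 2) * Real.sin α) •
        (Matrix.vecMulVec m n + Matrix.vecMulVec n m) := by
  intro U₁ n m
  have hs : Real.sin α = 2 * Real.sin (α / 2) * Real.cos (α / 2) := by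
    rw [← Real.sin_two_mul]; ring_nf
  have hc : Real.cos α = Real.cos (α / 2) ^ 2 - Real.sin (α / 2) ^ 2 := by
    rw [← Real.cos_two_mul']; ring_nf
  have h := Real.sin_sq_add_cos_sq α
  ext i j
  fin_cases i <;> fin_cases j <;>
    simp [U₁, n, m, rotZ, Matrix.mul_apply, Fin.sum_univ_three,
      Matrix.diagonal_apply]
  -- Diagonal entries use sin² α + cos² α = 1; off-diagonal ones only the double-angle formulas.
  · linear_combination (-η₂ ^ 2) * h + (η₂ ^ 2 - η₁ ^ 2) * Real.sin α * hs
  · linear_combination (η₂ ^ 2 - η₁ ^ 2) * Real.sin α * hc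
  · linear_combination (η₂ ^ 2 - η₁ ^ 2) * Real.sin α * hc
  · linear_combination (-η₁ ^ 2) * h - (η₂ ^ 2 - η₁ ^ 2) * Real.sin α * hs
end

section
/- Let η₂ > η₁ > 0 and let N = (N₁, N₂) ∈ ℝ² be a unit vector. Then the maximum of aN₁² + bN₂² + 2cN₁N₂ over (a, b, c) ∈ P is attained and equals ½(η₁² + η₂² + (η₂² − η₁²)|N₁² − N₂²|). -/
/-!
The constraint `a + b ≤ η₁² + η₂² - 2|c|` is exactly what pays for the off-diagonal term, since
`2 c N₁ N₂ ≤ |c|` on the unit circle. It also bounds the difference of the diagonal entries: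
`(a - b)² = (a + b)² - 4c² - 4η₁²η₂² ≤ (η₂² - η₁²)² - 4(η₁² + η₂²)|c|`, so `|a - b| ≤ η₂² - η₁²`
(`abs_diag_sub_le`). Writing `a N₁² + b N₂² = ((a + b) + (a - b)(N₁² - N₂²)) / 2` gives the upper
bound. It is attained at the diagonal point `(η₂², η₁², 0)` or `(η₁², η₂², 0)`, according to the
sign of `N₁² - N₂²`.
-/

/-- The set P = {(a,b,c) : a>0, b>0, ab−c² = η₁²η₂², a+b+2|c| ≤ η₁²+η₂²}. -/
def Pset (η₁ η₂ : ℝ) : Set (ℝ × ℝ × ℝ) :=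
  {p | 0 < p.1 ∧ 0 < p.2.1 ∧ p.1 * p.2.1 - p.2.2 ^ 2 = η₁ ^ 2 * η₂ ^ 2 ∧
       p.1 + p.2.1 + 2 * |p.2.2| ≤ η₁ ^ 2 + η₂ ^ 2}

lemma abs_diag_sub_le {η₁ η₂ a b c : ℝ} (h1 : 0 < η₁) (h2 : η₁ < η₂)
    (h : (a, b, c) ∈ Pset η₁ η₂) : |a - b| ≤ η₂ ^ 2 - η₁ ^ 2 := by
  obtain ⟨ha, hb, hdet, hsum⟩ := h
  dsimp only at ha hb hdet hsum
  have hc := abs_nonneg c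
  have hc2 := sq_abs c
  have hη : 0 ≤ η₂ ^ 2 - η₁ ^ 2 := by nlinarith
  have hS : (a + b) ^ 2 ≤ (η₁ ^ 2 + η₂ ^ 2 - 2 * |c|) ^ 2 :=
    pow_le_pow_left₀ (by positivity) (by linarith) 2
  have hpos : 0 ≤ (η₁ ^ 2 + η₂ ^ 2) * |c| := by positivity
  apply abs_le_of_sq_le_sq _ hη
  linear_combination hS + 4 * hpos - 4 * hdet + 4 * hc2

/-- The maximum of aN₁² + bN₂² + 2cN₁N₂ over (a,b,c) ∈ P is attained and equals
½(η₁² + η₂² + (η₂² − η₁²)|N₁² − N₂²|). -/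
theorem max_over_P (η₁ η₂ N₁ N₂ : ℝ) (h1 : 0 < η₁) (h2 : η₁ < η₂)
    (hN : N₁ ^ 2 + N₂ ^ 2 = 1) :
    IsGreatest {v : ℝ | ∃ a b c : ℝ, (a, b, c) ∈ Pset η₁ η₂ ∧
        v = a * N₁ ^ 2 + b * N₂ ^ 2 + 2 * c * N₁ * N₂}
      ((η₁ ^ 2 + η₂ ^ 2 + (η₂ ^ 2 - η₁ ^ 2) * |N₁ ^ 2 - N₂ ^ 2|) / 2) := by
  have h3 : 0 < η₂ := h1.trans h2
  constructor
  · rcases le_total 0 (N₁ ^ 2 - N₂ ^ 2) with hx | hx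
    · refine ⟨η₂ ^ 2, η₁ ^ 2, 0, ⟨by positivity, by positivity, by ring, ?_⟩, ?_⟩
      · simp [add_comm]
      · rw [abs_of_nonneg hx]
        linear_combination -(η₁ ^ 2 + η₂ ^ 2) / 2 * hN
    · refine ⟨η₁ ^ 2, η₂ ^ 2, 0, ⟨by positivity, by positivity, by ring, ?_⟩, ?_⟩
      · simp
      · rw [abs_of_nonpos hx]
        linear_combination -(η₁ ^ 2 + η₂ ^ 2) / 2 * hN
  · rintro v ⟨a, b, c, h, rfl⟩
    have hD := abs_diag_sub_le h1 h2 h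
    have hsum : a + b + 2 * |c| ≤ η₁ ^ 2 + η₂ ^ 2 := h.2.2.2
    have hdiag : (a - b) * (N₁ ^ 2 - N₂ ^ 2) ≤ (η₂ ^ 2 - η₁ ^ 2) * |N₁ ^ 2 - N₂ ^ 2| := by
      refine (le_abs_self _).trans ?_
      rw [abs_mul]
      gcongr
    have hNN : |2 * N₁ * N₂| ≤ 1 := by
      rw [abs_le]
      constructor <;> nlinarith [sq_nonneg (N₁ + N₂), sq_nonneg (N₁ - N₂)]
    have hoff : c * (2 * N₁ * N₂) ≤ |c| := by
      refine (le_abs_self _).trans ?_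
      rw [abs_mul]
      exact mul_le_of_le_one_right (abs_nonneg c) hNN
    linear_combination hdiag / 2 + hoff + hsum / 2 + (a + b) / 2 * hN
end

section
/- Let η₂ > η₁ > 0 and let N = (N₁, N₂) ∈ ℝ² be a unit vector, and set s* = (η₂⁴ − η₁⁴)/(η₂⁴ + η₁⁴). Then the minimum of aN₁² + bN₂² + 2cN₁N₂ over (a, b, c) ∈ P is attained and equals (η₁²η₂²/(η₁² + η₂²))·(1 + √(1 − |N₁² − N₂²|²)) if |N₁² − N₂²| ≤ s*, and equals ½(η₁² + η₂² − (η₂² − η₁²)|N₁² − N₂²|) if |N₁² − N₂²| ≥ s*. -/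
/-- The half-angle form of the threshold: if `s = sin θ` and `r = cos θ`, both comparisons are
between `tan (θ / 2)` and `(q - p) / (q + p)`. -/
lemma threshold_iff {p q s r : ℝ} (hp : 0 < p) (hpq : p < q) (hs : 0 ≤ s) (hr : 0 ≤ r)
    (h : s ^ 2 + r ^ 2 = 1) :
    (s * (p ^ 2 + q ^ 2) ≤ q ^ 2 - p ^ 2 ↔ s * (p + q) ≤ (q - p) * (1 + r)) ∧
    (q ^ 2 - p ^ 2 ≤ s * (p ^ 2 + q ^ 2) ↔ (q - p) * (1 + r) ≤ s * (p + q)) := by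
  have hd : 0 < q - p := by linarith
  have hq : 0 < q := by linarith
  have hD : 0 ≤ q ^ 2 - p ^ 2 := by nlinarith
  have h1r : 0 < 2 * (1 + r) := by linarith
  have i1 : (r * (p ^ 2 + q ^ 2)) ^ 2 - (2 * p * q) ^ 2
      = (q ^ 2 - p ^ 2) ^ 2 - (s * (p ^ 2 + q ^ 2)) ^ 2 := by
    linear_combination (p ^ 2 + q ^ 2) ^ 2 * h
  have i2 : ((q - p) * (1 + r)) ^ 2 - (s * (p + q)) ^ 2
      = 2 * (1 + r) * (r * (p ^ 2 + q ^ 2) - 2 * p * q) := by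
    linear_combination -(p + q) ^ 2 * h
  -- both comparisons are equivalent to one between `r` and `2 p q / (p² + q²)`
  constructor
  · trans 2 * p * q ≤ r * (p ^ 2 + q ^ 2)
    · rw [← sq_le_sq₀ (by positivity) hD,
        ← sq_le_sq₀ (a := 2 * p * q) (by positivity) (by positivity),
        ← sub_nonneg (a := (q ^ 2 - p ^ 2) ^ 2), ← i1, sub_nonneg]
    · rw [← sq_le_sq₀ (a := s * (p + q)) (by positivity) (by positivity), ← sub_nonneg,
        ← sub_nonneg (b := (s * (p + q)) ^ 2), i2, mul_nonneg_iff_of_pos_left h1r,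
        sub_nonneg]
  · trans r * (p ^ 2 + q ^ 2) ≤ 2 * p * q
    · rw [← sq_le_sq₀ hD (by positivity),
        ← sq_le_sq₀ (a := r * (p ^ 2 + q ^ 2)) (by positivity) (by positivity),
        ← sub_nonpos (a := (q ^ 2 - p ^ 2) ^ 2), ← i1, sub_nonpos]
    · rw [← sq_le_sq₀ (a := (q - p) * (1 + r)) (by positivity) (by positivity), ← sub_nonpos,
        ← sub_nonpos (a := ((q - p) * (1 + r)) ^ 2), i2,
        mul_nonpos_iff_pos_imp_nonpos, sub_nonpos]
      exact ⟨fun h => ⟨fun _ => h, fun _ => h1r.le⟩, fun h => h.1 h1r⟩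

lemma lower_one {p q s r t y k : ℝ} (hp : 0 < p) (hq : 0 < q) (hr : 0 ≤ r)
    (h : s ^ 2 + r ^ 2 = 1) (ht : 0 < t) (hk : 0 ≤ k)
    (hdet : t ^ 2 - y ^ 2 - k ^ 2 = p * q) (hS : 2 * (t + k) ≤ p + q) :
    p * q / (p + q) * (1 + r) ≤ t - y * s - k * r := by
  have hu : 0 < t + k := by linarith
  -- the degenerate form is a square once multiplied by `1 + r`
  have hpsd : 0 ≤ (1 - r) * (t + k) ^ 2 + (1 + r) * y ^ 2 - 2 * (t + k) * s * y := by
    have h1r : 0 < 1 + r := by linarith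
    refine nonneg_of_mul_nonneg_right (a := 1 + r) ?_ h1r
    have : (1 + r) * ((1 - r) * (t + k) ^ 2 + (1 + r) * y ^ 2 - 2 * (t + k) * s * y)
        = ((1 + r) * y - s * (t + k)) ^ 2 := by
      linear_combination -(t + k) ^ 2 * h
    rw [this]; positivity
  have hV : 2 * (t + k) * (t - y * s - k * r) = p * q * (1 + r)
      + ((1 - r) * (t + k) ^ 2 + (1 + r) * y ^ 2 - 2 * (t + k) * s * y) := by
    linear_combination (1 + r) * hdet
  have hpqr : 0 ≤ p * q * (1 + r) := by positivity
  have hVpos : 0 ≤ t - y * s - k * r :=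
    nonneg_of_mul_nonneg_right (a := 2 * (t + k)) (by linarith) (by linarith)
  rw [div_mul_eq_mul_div, div_le_iff₀ (by positivity)]
  nlinarith [mul_le_mul_of_nonneg_right hS hVpos]

lemma lower_two {p q s r t y k : ℝ} (hp : 0 < p) (hpq : p < q) (hs : 0 ≤ s) (hr : 0 ≤ r)
    (ht : 0 < t) (hk : 0 ≤ k)
    (hdet : t ^ 2 - y ^ 2 - k ^ 2 = p * q) (hS : 2 * (t + k) ≤ p + q)
    (hth : (q - p) * (1 + r) ≤ s * (p + q)) :
    (p + q - (q - p) * s) / 2 ≤ t - y * s - k * r := by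
  have hd : 0 < q - p := by linarith
  have hq : 0 < q := by linarith
  -- reverse Cauchy-Schwarz for the Lorentz form `t² - y²`
  have hsup : 2 * (p * q) ≤ t * (p + q) - y * (q - p) := by
    have h2 : y * (q - p) + 2 * (p * q) ≤ t * (p + q) := by
      refine (le_abs_self _).trans (abs_le_of_sq_le_sq ?_ (by positivity))
      have h3 : (t * (p + q)) ^ 2 - (y * (q - p) + 2 * (p * q)) ^ 2
          = p * q * (2 * y - (q - p)) ^ 2 + k ^ 2 * (p + q) ^ 2 := by
        linear_combination (p + q) ^ 2 * hdet
      have h4 : 0 ≤ p * q * (2 * y - (q - p)) ^ 2 + k ^ 2 * (p + q) ^ 2 := by positivity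
      linarith
    linarith
  -- after scaling by `q - p`, the multipliers are `s`, `s (p + q) - (q - p)`
  -- and `s (p + q) - (q - p) (1 + r)`
  refine le_of_mul_le_mul_left ?_ hd
  have m1 := mul_le_mul_of_nonneg_left hsup hs
  have m2 := mul_le_mul_of_nonneg_left hS
    (show 0 ≤ s * (p + q) - (q - p) by nlinarith [mul_nonneg hd.le hr])
  have m3 := mul_nonneg hk (sub_nonneg.2 hth)
  nlinarith

/-- The candidate minimiser of the reduced problem below the threshold. -/
lemma attain_one {p q s r : ℝ} (hp : 0 < p) (hpq : p < q) (hs : 0 ≤ s) (hr : 0 ≤ r)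
    (h : s ^ 2 + r ^ 2 = 1) (hth : s * (p + q) ≤ (q - p) * (1 + r)) :
    ∃ t y k : ℝ, 0 < t ∧ 0 ≤ k ∧ t ^ 2 - y ^ 2 - k ^ 2 = p * q ∧ 2 * (t + k) ≤ p + q ∧
      p * q / (p + q) * (1 + r) = t - y * s - k * r := by
  have hS : 0 < p + q := by linarith
  have h1r : 0 < 1 + r := by linarith
  obtain ⟨y, hy⟩ : ∃ y, y * (2 * (1 + r)) = s * (p + q) :=
    ⟨s * (p + q) / (2 * (1 + r)), by field_simp⟩
  obtain ⟨k, hk⟩ : ∃ k, k * (p + q) = (q - p) ^ 2 / 4 - y ^ 2 :=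
    ⟨((q - p) ^ 2 / 4 - y ^ 2) / (p + q), by field_simp⟩
  have hy0 : 0 ≤ y := nonneg_of_mul_nonneg_left (b := 2 * (1 + r)) (by rw [hy]; positivity)
    (by positivity)
  have hyd : y ≤ (q - p) / 2 := by
    refine le_of_mul_le_mul_right ?_ (show 0 < 2 * (1 + r) by positivity)
    linarith
  have hys : y * s = (1 - r) * (p + q) / 2 := by
    refine mul_right_cancel₀ h1r.ne' ?_
    linear_combination s * hy / 2 + (p + q) / 2 * h
  have hyy : (1 + r) * y ^ 2 = (1 - r) * (p + q) ^ 2 / 4 := by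
    linear_combination y * hy / 2 + (p + q) / 2 * hys
  have hk0 : 0 ≤ k := nonneg_of_mul_nonneg_left (b := p + q) (by rw [hk]; nlinarith) hS
  have ht0 : 0 < (p + q) / 2 - k := by
    refine pos_of_mul_pos_left ?_ hS.le
    nlinarith [mul_pos hp (hp.trans hpq), sq_nonneg y]
  refine ⟨(p + q) / 2 - k, y, k, ht0, hk0, ?_, by linarith, ?_⟩
  · linear_combination -hk
  · rw [div_mul_eq_mul_div, div_eq_iff hS.ne']
    linear_combination (1 + r) * hk + (p + q) * hys - hyy

lemma exists_sign (x : ℝ) : ∃ e : ℝ, e ^ 2 = 1 ∧ |e| = 1 ∧ e * x = |x| := by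
  rcases le_total 0 x with h | h
  · exact ⟨1, by simp, by simp, by simp [abs_of_nonneg h]⟩
  · exact ⟨-1, by simp, by simp, by simp [abs_of_nonpos h]⟩

/-- A bound for the reduced problem holds for every value of the quadratic form on `Pset`. -/
lemma value_reduce {η₁ η₂ N₁ N₂ a b c m : ℝ} (hN : N₁ ^ 2 + N₂ ^ 2 = 1)
    (habc : (a, b, c) ∈ Pset η₁ η₂)
    (hm : ∀ t y k : ℝ, 0 < t → 0 ≤ k → t ^ 2 - y ^ 2 - k ^ 2 = η₁ ^ 2 * η₂ ^ 2 →
      2 * (t + k) ≤ η₁ ^ 2 + η₂ ^ 2 → m ≤ t - y * |N₁ ^ 2 - N₂ ^ 2| - k * |2 * N₁ * N₂|) :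
    m ≤ a * N₁ ^ 2 + b * N₂ ^ 2 + 2 * c * N₁ * N₂ := by
  obtain ⟨ha, hb, hdet, hS⟩ := habc
  dsimp only at ha hb hdet hS
  obtain ⟨e, he, -, hes⟩ := exists_sign (N₁ ^ 2 - N₂ ^ 2)
  have hv := hm ((a + b) / 2) (-e * ((a - b) / 2)) |c| (by linarith) (abs_nonneg c)
    (by rw [sq_abs]; linear_combination hdet - ((a - b) / 2) ^ 2 * he) (by linarith)
  have hc : -(|c| * |2 * N₁ * N₂|) ≤ c * (2 * N₁ * N₂) := by
    rw [← abs_mul]; exact neg_abs_le _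
  have hval : a * N₁ ^ 2 + b * N₂ ^ 2 + 2 * c * N₁ * N₂
      = (a + b) / 2 - -e * ((a - b) / 2) * |N₁ ^ 2 - N₂ ^ 2| + c * (2 * N₁ * N₂) := by
    rw [← hes]
    linear_combination (a + b) / 2 * hN - (a - b) / 2 * (N₁ ^ 2 - N₂ ^ 2) * he
  linarith

/-- Every admissible point of the reduced problem comes from a point of `Pset` with the same
value. -/
lemma value_realize {η₁ η₂ N₁ N₂ t y k : ℝ} (h1 : 0 < η₁) (h2 : 0 < η₂)
    (hN : N₁ ^ 2 + N₂ ^ 2 = 1) (ht : 0 < t) (hk : 0 ≤ k)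
    (hdet : t ^ 2 - y ^ 2 - k ^ 2 = η₁ ^ 2 * η₂ ^ 2) (hS : 2 * (t + k) ≤ η₁ ^ 2 + η₂ ^ 2) :
    ∃ a b c : ℝ, (a, b, c) ∈ Pset η₁ η₂ ∧
      t - y * |N₁ ^ 2 - N₂ ^ 2| - k * |2 * N₁ * N₂|
        = a * N₁ ^ 2 + b * N₂ ^ 2 + 2 * c * N₁ * N₂ := by
  obtain ⟨e, he, he', hes⟩ := exists_sign (N₁ ^ 2 - N₂ ^ 2)
  obtain ⟨f, hf, hf', hfs⟩ := exists_sign (2 * N₁ * N₂)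
  have hlt : |e * y| < t := by
    rw [abs_mul, he', one_mul]
    refine abs_lt_of_sq_lt_sq ?_ ht.le
    have : 0 < η₁ ^ 2 * η₂ ^ 2 := by positivity
    nlinarith [sq_nonneg k]
  obtain ⟨hl, hu⟩ := abs_lt.1 hlt
  refine ⟨t - e * y, t + e * y, -f * k, ⟨?_, ?_, ?_, ?_⟩, ?_⟩
  · dsimp only; linarith
  · dsimp only; linarith
  · dsimp only; linear_combination hdet - y ^ 2 * he - k ^ 2 * hf
  · dsimp only
    rw [abs_mul, abs_neg, hf', abs_of_nonneg hk]; linarith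
  · rw [← hes, ← hfs]
    linear_combination -t * hN

/-- The minimum of aN₁² + bN₂² + 2cN₁N₂ over (a,b,c) ∈ P is attained and equals
(η₁²η₂²/(η₁²+η₂²))(1 + √(1 − |N₁²−N₂²|²)) if |N₁²−N₂²| ≤ s*, and
½(η₁² + η₂² − (η₂² − η₁²)|N₁² − N₂²|) if |N₁²−N₂²| ≥ s*,
where s* = (η₂⁴ − η₁⁴)/(η₂⁴ + η₁⁴). -/
theorem min_over_P (η₁ η₂ N₁ N₂ : ℝ) (h1 : 0 < η₁) (h2 : η₁ < η₂)
    (hN : N₁ ^ 2 + N₂ ^ 2 = 1) :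
    (|N₁ ^ 2 - N₂ ^ 2| ≤ (η₂ ^ 4 - η₁ ^ 4) / (η₂ ^ 4 + η₁ ^ 4) →
      IsLeast {v : ℝ | ∃ a b c : ℝ, (a, b, c) ∈ Pset η₁ η₂ ∧
          v = a * N₁ ^ 2 + b * N₂ ^ 2 + 2 * c * N₁ * N₂}
        (η₁ ^ 2 * η₂ ^ 2 / (η₁ ^ 2 + η₂ ^ 2) *
          (1 + Real.sqrt (1 - |N₁ ^ 2 - N₂ ^ 2| ^ 2)))) ∧
    ((η₂ ^ 4 - η₁ ^ 4) / (η₂ ^ 4 + η₁ ^ 4) ≤ |N₁ ^ 2 - N₂ ^ 2| →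
      IsLeast {v : ℝ | ∃ a b c : ℝ, (a, b, c) ∈ Pset η₁ η₂ ∧
          v = a * N₁ ^ 2 + b * N₂ ^ 2 + 2 * c * N₁ * N₂}
        ((η₁ ^ 2 + η₂ ^ 2 - (η₂ ^ 2 - η₁ ^ 2) * |N₁ ^ 2 - N₂ ^ 2|) / 2)) := by
  have hη₂ : 0 < η₂ := h1.trans h2
  have hp : 0 < η₁ ^ 2 := by positivity
  have hq : 0 < η₂ ^ 2 := by positivity
  have hpq : η₁ ^ 2 < η₂ ^ 2 := by gcongr
  have hs := abs_nonneg (N₁ ^ 2 - N₂ ^ 2)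
  have hr := abs_nonneg (2 * N₁ * N₂)
  have hsr : |N₁ ^ 2 - N₂ ^ 2| ^ 2 + |2 * N₁ * N₂| ^ 2 = 1 := by
    rw [sq_abs, sq_abs]
    linear_combination (N₁ ^ 2 + N₂ ^ 2 + 1) * hN
  have hsqrt : Real.sqrt (1 - |N₁ ^ 2 - N₂ ^ 2| ^ 2) = |2 * N₁ * N₂| := by
    rw [← hsr, add_sub_cancel_left, Real.sqrt_sq hr]
  have hiff := threshold_iff hp hpq hs hr hsr
  have hden : 0 < η₂ ^ 4 + η₁ ^ 4 := by positivity
  rw [hsqrt]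
  constructor
  · intro hle
    rw [le_div_iff₀ hden] at hle
    have hth := hiff.1.1 (by linarith)
    refine ⟨?_, ?_⟩
    · obtain ⟨t, y, k, ht, hk, hdet, hS, hv⟩ := attain_one hp hpq hs hr hsr hth
      rw [Set.mem_ofPred_eq, hv]
      exact value_realize h1 hη₂ hN ht hk hdet hS
    · rintro v ⟨a, b, c, habc, rfl⟩
      exact value_reduce hN habc fun t y k ht hk hdet hS =>
        lower_one hp hq hr hsr ht hk hdet hS
  · intro hge
    rw [div_le_iff₀ hden] at hge
    have hth : (η₂ ^ 2 - η₁ ^ 2) * (1 + |2 * N₁ * N₂|)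
        ≤ |N₁ ^ 2 - N₂ ^ 2| * (η₁ ^ 2 + η₂ ^ 2) := hiff.2.1 (by linarith)
    refine ⟨?_, ?_⟩
    · obtain ⟨a, b, c, habc, hv⟩ := value_realize (N₁ := N₁) (N₂ := N₂)
        (t := (η₁ ^ 2 + η₂ ^ 2) / 2) (y := (η₂ ^ 2 - η₁ ^ 2) / 2) (k := 0) h1 hη₂ hN
        (by positivity) le_rfl (by ring) (by linarith)
      exact ⟨a, b, c, habc, by rw [← hv]; ring⟩
    · rintro v ⟨a, b, c, habc, rfl⟩
      exact value_reduce hN habc fun t y k ht hk hdet hS =>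
        lower_two hp hpq hs hr ht hk hdet hS hth
end

section
/- Let η₂ > η₁ > 0 and let N = (N₁, N₂) ∈ ℝ² be a unit vector. Define m₊(N) as the maximum and m₋(N) as the minimum of aN₁² + bN₂² + 2cN₁N₂ over (a, b, c) ∈ P. Then m₋(N) ≤ ½(η₁² + η₂²) ≤ m₊(N) and m₊(N) + m₋(N) ≤ η₁² + η₂². -/
/-- If m₊(N) and m₋(N) are the maximum and minimum of aN₁² + bN₂² + 2cN₁N₂ over
(a,b,c) ∈ P, then m₋(N) ≤ ½(η₁²+η₂²) ≤ m₊(N) and m₊(N) + m₋(N) ≤ η₁² + η₂². -/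
theorem min_max_bounds_over_P (η₁ η₂ N₁ N₂ : ℝ) (h1 : 0 < η₁) (h2 : η₁ < η₂)
    (hN : N₁ ^ 2 + N₂ ^ 2 = 1) (mMinus mPlus : ℝ)
    (hmax : IsGreatest {v : ℝ | ∃ a b c : ℝ, (a, b, c) ∈ Pset η₁ η₂ ∧
        v = a * N₁ ^ 2 + b * N₂ ^ 2 + 2 * c * N₁ * N₂} mPlus)
    (hmin : IsLeast {v : ℝ | ∃ a b c : ℝ, (a, b, c) ∈ Pset η₁ η₂ ∧
        v = a * N₁ ^ 2 + b * N₂ ^ 2 + 2 * c * N₁ * N₂} mMinus) :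
    mMinus ≤ (η₁ ^ 2 + η₂ ^ 2) / 2 ∧ (η₁ ^ 2 + η₂ ^ 2) / 2 ≤ mPlus ∧
      mPlus + mMinus ≤ η₁ ^ 2 + η₂ ^ 2 := by
  obtain ⟨⟨a, b, c, ⟨ha, hb, hdet, hsum⟩, rfl⟩, hub⟩ := hmax
  obtain ⟨-, hlb⟩ := hmin
  simp only at ha hb hdet hsum
  have hη₂ : 0 < η₂ := h1.trans h2
  have mem₁ : (η₁ ^ 2, η₂ ^ 2, (0 : ℝ)) ∈ Pset η₁ η₂ :=
    ⟨by positivity, by positivity, by simp, by simp⟩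
  have mem₂ : (η₂ ^ 2, η₁ ^ 2, (0 : ℝ)) ∈ Pset η₁ η₂ :=
    ⟨by positivity, by positivity, by simp [mul_comm], by simp [add_comm]⟩
  have mem₃ : (b, a, -c) ∈ Pset η₁ η₂ :=
    ⟨hb, ha, by linarith, by simpa [add_comm b a] using hsum⟩
  have hN' : N₂ ^ 2 = 1 - N₁ ^ 2 := by linarith
  have lb₁ := hlb ⟨_, _, _, mem₁, rfl⟩
  have lb₂ := hlb ⟨_, _, _, mem₂, rfl⟩
  have lb₃ := hlb ⟨_, _, _, mem₃, rfl⟩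
  have ub₁ := hub ⟨_, _, _, mem₁, rfl⟩
  have ub₂ := hub ⟨_, _, _, mem₂, rfl⟩
  have hc := abs_nonneg c
  rw [hN'] at lb₁ lb₂ lb₃ ub₁ ub₂ ⊢
  exact ⟨by linarith, by linarith, by linarith⟩
end

section
/- Let η₂ > η₁ > 0 and let N = (N₁, N₂) ∈ ℝ² be a unit vector with N₁N₂ ≠ 0. Define ψ₋(x, y) = ½(x + y(N₁² − N₂²) − 2|N₁N₂|√(x² − y² − 4η₁²η₂²)). Then ψ₋ has no critical point on the open set {(x, y) ∈ ℝ² : x² − y² > 4η₁²η₂², x > 0}; that is, the gradient of ψ₋ is nonzero at every such point. -/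
/-! At a critical point, with `S = √(x² - y² - 4η₁²η₂²) > 0`, `k = 2|N₁N₂|` and
`c = N₁² - N₂²`, the two partial derivatives give `S = k x` and `c S = -k y`. Since
`k ≠ 0` this yields `y = -c x`, and `k² + c² = (N₁² + N₂²)² = 1` forces
`S² = k² x² = x² - y²`, contradicting `η₁ η₂ ≠ 0`. -/

/-- ψ₋ has no critical point (nonzero gradient) on the open set
{(x,y) : x² − y² > 4η₁²η₂², x > 0}. -/
theorem psi_minus_no_critical_point (η₁ η₂ N₁ N₂ : ℝ) (h1 : 0 < η₁) (h2 : η₁ < η₂)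
    (hN : N₁ ^ 2 + N₂ ^ 2 = 1) (hNN : N₁ * N₂ ≠ 0) :
    ∀ p : ℝ × ℝ, 4 * η₁ ^ 2 * η₂ ^ 2 < p.1 ^ 2 - p.2 ^ 2 → 0 < p.1 →
      fderiv ℝ (fun q : ℝ × ℝ =>
        (q.1 + q.2 * (N₁ ^ 2 - N₂ ^ 2) -
          2 * |N₁ * N₂| * Real.sqrt (q.1 ^ 2 - q.2 ^ 2 - 4 * η₁ ^ 2 * η₂ ^ 2)) / 2)
        p ≠ 0 := by
  rintro ⟨x, y⟩ hD hx h0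
  simp only at hD hx
  have hDpos : 0 < x ^ 2 - y ^ 2 - 4 * η₁ ^ 2 * η₂ ^ 2 := by linarith
  have hη : 0 < 4 * η₁ ^ 2 * η₂ ^ 2 := by
    have : 0 < η₂ := h1.trans h2
    positivity
  have hk : 0 < 2 * |N₁ * N₂| := by positivity
  have hkc : (2 * |N₁ * N₂|) ^ 2 + (N₁ ^ 2 - N₂ ^ 2) ^ 2 = 1 := by
    rw [mul_pow, sq_abs]
    linear_combination (N₁ ^ 2 + N₂ ^ 2 + 1) * hN
  have hf : HasFDerivAt (fun q : ℝ × ℝ => q.1) (ContinuousLinearMap.fst ℝ ℝ ℝ) (x, y) :=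
    hasFDerivAt_fst
  have hs : HasFDerivAt (fun q : ℝ × ℝ => q.2) (ContinuousLinearMap.snd ℝ ℝ ℝ) (x, y) :=
    hasFDerivAt_snd
  have hR := (((hf.pow 2).sub (hs.pow 2)).sub_const (4 * η₁ ^ 2 * η₂ ^ 2)).sqrt
    (by simpa using hDpos.ne')
  have hψ := ((hf.add (hs.mul_const (N₁ ^ 2 - N₂ ^ 2))).sub
    (hR.const_mul (2 * |N₁ * N₂|))).mul_const (2⁻¹ : ℝ)
  have hE := hψ.fderiv.symm.trans (by simp only [div_eq_mul_inv] at h0; exact h0)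
  have e1 := DFunLike.congr_fun hE ((1 : ℝ), (0 : ℝ))
  have e2 := DFunLike.congr_fun hE ((0 : ℝ), (1 : ℝ))
  have hSpos := Real.sqrt_pos.2 hDpos
  have hSsq := Real.sq_sqrt hDpos.le
  generalize 2 * |N₁ * N₂| = k at *
  generalize N₁ ^ 2 - N₂ ^ 2 = c at *
  simp at e1 e2
  generalize √(x ^ 2 - y ^ 2 - 4 * η₁ ^ 2 * η₂ ^ 2) = S at *
  have hS0 := hSpos.ne'
  have a1 : S = k * x := by
    field_simp at e1
    linarith
  have a2 : c * S = -(k * y) := by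
    field_simp at e2
    linarith
  have a3 : y = -(c * x) := by
    apply mul_left_cancel₀ hk.ne'
    rw [a1] at a2
    linarith
  rw [a1, a3] at hSsq
  have : 4 * η₁ ^ 2 * η₂ ^ 2 = 0 := by linear_combination hSsq - x ^ 2 * hkc
  exact hη.ne' this
end

section
/- Let η₂ > η₁ > 0, α ∈ ℝ, i ∈ {1, 2}, and let ñ = (n₁, n₂) ∈ ℝ² be a unit vector with ñ⊥ = (−n₂, n₁) and N = (N₁, N₂) = R̃_α ñ⊥. Then there exist F̃ ∈ SO(2)Ũᵢ, Ã ∈ K̃^pc·R̃_α and ã ∈ ℝ² with F̃ − Ã = ã⊗ñ if and only if there exists (a, b, c) ∈ P with |Ũᵢ ñ⊥|² = aN₁² + bN₂² + 2cN₁N₂. -/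
/-! If `F - A = a ⊗ ñ`, then `F` and `A` agree on `ñ⊥`; since the length of `M x` depends only on the Gram
matrix `Mᵀ * M`, comparing the lengths of `F ñ⊥` and `A ñ⊥` gives the stated quadratic equation
(`dotProduct_mulVec_self`).

Conversely, a triple `(a, b, c)` in `P` is the Gram matrix of an explicit upper triangular `B` with
determinant `η₁ η₂` (`exists_gram_factor`). The equation says that `Ũᵢ ñ⊥` and `B N` have the same
nonzero length, so a rotation `R` takes the first to the second (`exists_rotation`). Then
`R Ũᵢ - B R̃_α` annihilates `ñ⊥`, and a 2×2 matrix annihilating `ñ⊥` is of the form `a ⊗ ñ`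
(`eq_vecMulVec_of_mulVec_perp`).
-/

open Matrix

/-- A real 2×2 matrix is a rotation (element of SO(2)). -/
def IsSO2 (R : Matrix (Fin 2) (Fin 2) ℝ) : Prop :=
  Rᵀ * R = 1 ∧ R.det = 1

/-- The 2×2 rotation matrix through angle α. -/
noncomputable def rot2 (α : ℝ) : Matrix (Fin 2) (Fin 2) ℝ :=
  !![Real.cos α, -Real.sin α; Real.sin α, Real.cos α]

/-- The polyconvexification K̃^pc of the two-well set K̃. -/
def Kpc (η₁ η₂ : ℝ) : Set (Matrix (Fin 2) (Fin 2) ℝ) :=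
  {A | 0 < A.det ∧ ∃ a b c : ℝ, (a, b, c) ∈ Pset η₁ η₂ ∧ Aᵀ * A = !![a, c; c, b]}

theorem dotProduct_mulVec_self (M : Matrix (Fin 2) (Fin 2) ℝ) (x : Fin 2 → ℝ) :
    (M *ᵥ x) ⬝ᵥ (M *ᵥ x) = x ⬝ᵥ ((Mᵀ * M) *ᵥ x) := by
  rw [← mulVec_mulVec, dotProduct_mulVec x, vecMul_transpose]

theorem exists_rotation (u v : Fin 2 → ℝ) (hu : 0 < u ⬝ᵥ u) (h : u ⬝ᵥ u = v ⬝ᵥ v) :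
    ∃ R : Matrix (Fin 2) (Fin 2) ℝ, IsSO2 R ∧ R *ᵥ u = v := by
  simp only [dotProduct, Fin.sum_univ_two] at hu h
  -- The cosine and sine of the angle from `u` to `v`.
  obtain ⟨p, hp⟩ : ∃ p, p * (u 0 * u 0 + u 1 * u 1) = u 0 * v 0 + u 1 * v 1 :=
    ⟨_, div_mul_cancel₀ _ hu.ne'⟩
  obtain ⟨q, hq⟩ : ∃ q, q * (u 0 * u 0 + u 1 * u 1) = u 0 * v 1 - u 1 * v 0 :=
    ⟨_, div_mul_cancel₀ _ hu.ne'⟩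
  have hpq : p ^ 2 + q ^ 2 = 1 := by
    -- Lagrange's identity: `(u·v)² + (u×v)² = |u|² |v|²`.
    have : (p ^ 2 + q ^ 2) * (u 0 * u 0 + u 1 * u 1) ^ 2
        = 1 * (u 0 * u 0 + u 1 * u 1) ^ 2 := by
      calc _ = (p * (u 0 * u 0 + u 1 * u 1)) ^ 2 + (q * (u 0 * u 0 + u 1 * u 1)) ^ 2 := by ring
        _ = (u 0 * u 0 + u 1 * u 1) * (v 0 * v 0 + v 1 * v 1) := by rw [hp, hq]; ring
        _ = _ := by rw [← h]; ring
    exact mul_right_cancel₀ (pow_ne_zero 2 hu.ne') this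
  refine ⟨!![p, -q; q, p], ⟨?_, ?_⟩, ?_⟩
  · ext i j
    fin_cases i <;> fin_cases j <;> simp [mul_apply, Fin.sum_univ_two] <;> linarith
  · rw [det_fin_two_of]; linarith
  · ext i
    fin_cases i <;> simp [mulVec, dotProduct, Fin.sum_univ_two] <;>
      apply mul_right_cancel₀ hu.ne'
    · linear_combination u 0 * hp - u 1 * hq
    · linear_combination u 0 * hq + u 1 * hp

theorem eq_vecMulVec_of_mulVec_perp (M : Matrix (Fin 2) (Fin 2) ℝ) (n₁ n₂ : ℝ)
    (hn : n₁ ^ 2 + n₂ ^ 2 = 1) (h : M *ᵥ ![-n₂, n₁] = 0) :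
    M = vecMulVec (M *ᵥ ![n₁, n₂]) ![n₁, n₂] := by
  ext i j
  have hi := congrFun h i
  simp only [mulVec, dotProduct, Fin.sum_univ_two, cons_val_zero, cons_val_one, Pi.zero_apply] at hi
  fin_cases j <;> simp only [vecMulVec_apply, mulVec, dotProduct, Fin.sum_univ_two, Fin.zero_eta,
    Fin.mk_one, cons_val_zero, cons_val_one]
  · linear_combination (-M i 0) * hn - n₂ * hi
  · linear_combination (-M i 1) * hn + n₁ * hi

/-- The Cholesky factorization of a positive definite matrix with determinant `d ^ 2`. -/
theorem exists_gram_factor {a b c d : ℝ} (ha : 0 < a) (hd : 0 < d) (h : a * b - c ^ 2 = d ^ 2) :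
    ∃ B : Matrix (Fin 2) (Fin 2) ℝ, 0 < B.det ∧ Bᵀ * B = !![a, c; c, b] := by
  obtain ⟨s, hs, rfl⟩ : ∃ s, 0 < s ∧ s ^ 2 = a := ⟨√a, Real.sqrt_pos.2 ha, Real.sq_sqrt ha.le⟩
  refine ⟨!![s, c / s; 0, d / s], ?_, ?_⟩
  · rw [det_fin_two_of, mul_zero, sub_zero]
    positivity
  · ext i j
    fin_cases i <;> fin_cases j <;> simp [mul_apply, Fin.sum_univ_two] <;> field_simp
    linarith

theorem dotProduct_gram (a b c : ℝ) (x : Fin 2 → ℝ) :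
    x ⬝ᵥ (!![a, c; c, b] *ᵥ x) = a * x 0 ^ 2 + b * x 1 ^ 2 + 2 * c * x 0 * x 1 := by
  simp [mulVec, dotProduct, Fin.sum_univ_two]
  ring

/-- Compatibility of a pure variant with K̃^pc·R̃_α across an interface with
normal ñ is equivalent to |Ũᵢñ⊥|² being attained as aN₁² + bN₂² + 2cN₁N₂ over P. -/
theorem compatibility_iff_value_attained (η₁ η₂ α n₁ n₂ : ℝ)
    (h1 : 0 < η₁) (h2 : η₁ < η₂) (hn : n₁ ^ 2 + n₂ ^ 2 = 1) (i : Fin 2) :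
    let Ui : Matrix (Fin 2) (Fin 2) ℝ :=
      if i = 0 then Matrix.diagonal ![η₂, η₁] else Matrix.diagonal ![η₁, η₂]
    let nvec : Fin 2 → ℝ := ![n₁, n₂]
    let nperp : Fin 2 → ℝ := ![-n₂, n₁]
    let N : Fin 2 → ℝ := rot2 α *ᵥ nperp
    ((∃ (F A : Matrix (Fin 2) (Fin 2) ℝ) (a : Fin 2 → ℝ),
        (∃ R : Matrix (Fin 2) (Fin 2) ℝ, IsSO2 R ∧ F = R * Ui) ∧
        (∃ B ∈ Kpc η₁ η₂, A = B * rot2 α) ∧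
        F - A = Matrix.vecMulVec a nvec) ↔
      (∃ a b c : ℝ, (a, b, c) ∈ Pset η₁ η₂ ∧
        (Ui *ᵥ nperp) ⬝ᵥ (Ui *ᵥ nperp) =
          a * N 0 ^ 2 + b * N 1 ^ 2 + 2 * c * N 0 * N 1)) := by
  intro Ui nvec nperp N
  constructor
  · rintro ⟨F, A, v, ⟨R, hR, rfl⟩, ⟨B, ⟨-, a, b, c, hP, hB⟩, rfl⟩, hFA⟩
    refine ⟨a, b, c, hP, ?_⟩
    have hperp : nvec ⬝ᵥ nperp = 0 := by
      simp [nvec, nperp]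
      ring
    have key : R *ᵥ (Ui *ᵥ nperp) = B *ᵥ N := by
      rw [← sub_eq_zero, mulVec_mulVec, mulVec_mulVec, ← sub_mulVec, hFA, vecMulVec_mulVec, hperp]
      simp
    calc (Ui *ᵥ nperp) ⬝ᵥ (Ui *ᵥ nperp)
        = (R *ᵥ (Ui *ᵥ nperp)) ⬝ᵥ (R *ᵥ (Ui *ᵥ nperp)) := by
          rw [dotProduct_mulVec_self R, hR.1, one_mulVec]
      _ = _ := by rw [key, dotProduct_mulVec_self, hB, dotProduct_gram]
  · rintro ⟨a, b, c, hP, h⟩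
    have h3 : 0 < η₂ := h1.trans h2
    obtain ⟨B, hdet, hB⟩ := exists_gram_factor (d := η₁ * η₂) hP.1 (by positivity)
      (hP.2.2.1.trans (mul_pow _ _ _).symm)
    have hu : 0 < (Ui *ᵥ nperp) ⬝ᵥ (Ui *ᵥ nperp) := by
      -- Both eigenvalues of `Ui` are at least `η₁`, so `|Ui ñ⊥|² ≥ η₁²`.
      have hsq : η₁ ^ 2 ≤ η₂ ^ 2 := by gcongr
      apply lt_of_lt_of_le (pow_pos h1 2)
      fin_cases i <;> simp [Ui, nperp, mulVec_diagonal, dotProduct, Fin.sum_univ_two]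
      · nlinarith [mul_nonneg (sub_nonneg.2 hsq) (sq_nonneg n₂)]
      · nlinarith [mul_nonneg (sub_nonneg.2 hsq) (sq_nonneg n₁)]
    obtain ⟨R, hR, hRu⟩ := exists_rotation (Ui *ᵥ nperp) (B *ᵥ N) hu
      (by rw [h, dotProduct_mulVec_self, hB, dotProduct_gram])
    refine ⟨R * Ui, B * rot2 α, _, ⟨R, hR, rfl⟩, ⟨B, ⟨hdet, a, b, c, hP, hB⟩, rfl⟩,
      eq_vecMulVec_of_mulVec_perp _ n₁ n₂ hn ?_⟩
    rw [sub_mulVec, ← mulVec_mulVec, ← mulVec_mulVec, sub_eq_zero]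
    exact hRu
end

section
/- Let τ > 1 and let f be the associated function. Then for all α, θ ∈ ℝ it is impossible that both f(|cos 2(θ + α)|) < |cos 2θ| and f(|cos 2θ|) < |cos 2(θ + α)| hold; equivalently, the sets E₁ = {θ ∈ ℝ : f(|cos 2(θ + α)|) < |cos 2θ|} and E₂ = {θ ∈ ℝ : f(|cos 2θ|) < |cos 2(θ + α)|} are disjoint. -/
/-!
The function `f` lies on or above the diagonal of `[0, 1]` (`le_fBC`), so `f(a) < b` and
`f(b) < a` would give `a < b < a`. On the lower branch, `s ≤ f(s)` is Cauchy–Schwarz for the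
vectors `(τ⁴ - 1, 2τ²)`, of norm `τ⁴ + 1`, and `(s, √(1 - s²))`, of norm `1`.
-/

/-- The function f of the characterization theorem, with parameter τ. -/
noncomputable def fBC (τ s : ℝ) : ℝ :=
  if s ≤ (τ ^ 4 - 1) / (τ ^ 4 + 1) then
    (τ ^ 4 + 1 - 2 * τ ^ 2 * Real.sqrt (1 - s ^ 2)) / (τ ^ 4 - 1)
  else s

lemma le_fBC {τ s : ℝ} (hτ : 1 < τ) (hs0 : 0 ≤ s) (hs1 : s ≤ 1) : s ≤ fBC τ s := by
  unfold fBC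
  split_ifs
  · have h4 : 1 < τ ^ 4 := one_lt_pow₀ hτ (by norm_num)
    rw [le_div_iff₀ (by linarith)]
    have hr : Real.sqrt (1 - s ^ 2) ^ 2 = 1 - s ^ 2 := Real.sq_sqrt (by nlinarith)
    set r := Real.sqrt (1 - s ^ 2)
    have key : (τ ^ 4 - 1) * s + 2 * τ ^ 2 * r ≤ τ ^ 4 + 1 := by
      refine (abs_le_of_sq_le_sq' ?_ (by linarith)).2
      -- Lagrange's identity, using `s² + r² = 1`.
      have e : (τ ^ 4 + 1) ^ 2 - ((τ ^ 4 - 1) * s + 2 * τ ^ 2 * r) ^ 2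
          = ((τ ^ 4 - 1) * r - 2 * τ ^ 2 * s) ^ 2 := by
        linear_combination (-(τ ^ 4 + 1) ^ 2) * hr
      linarith [sq_nonneg ((τ ^ 4 - 1) * r - 2 * τ ^ 2 * s)]
    linarith
  · exact le_rfl

/-- The sets E₁ and E₂ are disjoint: one cannot have both
f(|cos 2(θ+α)|) < |cos 2θ| and f(|cos 2θ|) < |cos 2(θ+α)|. -/
theorem E1_E2_disjoint (τ : ℝ) (hτ : 1 < τ) (α θ : ℝ) :
    ¬(fBC τ |Real.cos (2 * (θ + α))| < |Real.cos (2 * θ)| ∧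
      fBC τ |Real.cos (2 * θ)| < |Real.cos (2 * (θ + α))|) := by
  rintro ⟨h₁, h₂⟩
  have ha := le_fBC hτ (abs_nonneg _) (Real.abs_cos_le_one (2 * (θ + α)))
  have hb := le_fBC hτ (abs_nonneg _) (Real.abs_cos_le_one (2 * θ))
  linarith
end

section
/- Let τ > 1 and let f be the associated function on [0, 1]. Then f is convex on [0, 1], strictly increasing on [0, 1], continuously differentiable on [0, 1] (in particular the two branches match to first order at s = s*), and satisfies f(s) ≥ s for all s ∈ [0, 1]. -/
/-- The function of the theorem in terms of the parameters `a`, `b` and the breakpoint `c`. -/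
noncomputable def fBCAux (a b c s : ℝ) : ℝ :=
  if s ≤ c then a - b * Real.sqrt (1 - s ^ 2) else s

/-- The derivative of `fBCAux` on `(-1, ∞)`, provided that `a² = b² + 1` and `a c = 1` (with `b > 0`
and `0 < c < 1`). Truncating the argument at the breakpoint `c` makes
continuity there automatic. -/
noncomputable def fBCDeriv (b c s : ℝ) : ℝ :=
  b * (min s c / Real.sqrt (1 - min s c ^ 2))

section

variable {a b c : ℝ}

theorem fBC_sqrt_break (hb : 0 < b) (hc : 0 < c) (hab : a ^ 2 = b ^ 2 + 1) (hac : a * c = 1) :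
    Real.sqrt (1 - c ^ 2) = b * c := by
  have h : 1 - c ^ 2 = (b * c) ^ 2 := by
    linear_combination -(a * c + 1) * hac + c ^ 2 * hab
  rw [h, Real.sqrt_sq (by positivity)]

theorem fBC_hasDerivAt_branch {s : ℝ} (h1 : -1 < s) (h2 : s < 1) :
    HasDerivAt (fun x => a - b * Real.sqrt (1 - x ^ 2)) (b * (s / Real.sqrt (1 - s ^ 2))) s := by
  have hpos : 0 < 1 - s ^ 2 := by nlinarith
  have hd : HasDerivAt (fun x : ℝ => 1 - x ^ 2) (-(2 * s)) s := by
    simpa using (hasDerivAt_pow 2 s).const_sub 1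
  refine (((hd.sqrt hpos.ne').const_mul b).const_sub a).congr_deriv ?_
  have := (Real.sqrt_pos.2 hpos).ne'
  field_simp

theorem fBCAux_hasDerivAt (hb : 0 < b) (hc : 0 < c) (hc1 : c < 1) (hab : a ^ 2 = b ^ 2 + 1)
    (hac : a * c = 1) {s : ℝ} (hs : -1 < s) :
    HasDerivAt (fBCAux a b c) (fBCDeriv b c s) s := by
  have hsq := fBC_sqrt_break hb hc hab hac
  have hone : b * (c / Real.sqrt (1 - c ^ 2)) = 1 := by
    rw [hsq]; field_simp
  rcases lt_trichotomy s c with h | h | h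
  · have hd := fBC_hasDerivAt_branch (a := a) (b := b) hs (h.trans hc1)
    rw [fBCDeriv, min_eq_left h.le]
    refine hd.congr_of_eventuallyEq ?_
    filter_upwards [Iio_mem_nhds h] with x hx
    exact if_pos (le_of_lt hx)
  · subst h
    have hd := fBC_hasDerivAt_branch (a := a) (b := b) hs hc1
    rw [fBCDeriv, min_self]
    have hval : fBCAux a b s s = s := by
      rw [fBCAux, if_pos le_rfl, hsq]
      have : s ≠ 0 := hc.ne'
      apply mul_left_cancel₀ this
      linear_combination hac - (a * s + 1) * hac + s ^ 2 * hab
    have hl : HasDerivWithinAt (fBCAux a b s) (b * (s / Real.sqrt (1 - s ^ 2))) (Set.Iic s) s :=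
      hd.hasDerivWithinAt.congr (fun x hx => if_pos hx) (if_pos le_rfl)
    have hr : HasDerivWithinAt (fBCAux a b s) (b * (s / Real.sqrt (1 - s ^ 2))) (Set.Ici s) s := by
      rw [hone]
      refine (hasDerivWithinAt_id s (Set.Ici s)).congr (fun x hx => ?_) hval
      rcases eq_or_lt_of_le (Set.mem_Ici.1 hx) with h | h
      · rw [← h]; exact hval
      · exact if_neg (not_le.2 h)
    have hu := hl.union hr
    rwa [Set.Iic_union_Ici, hasDerivWithinAt_univ] at hu
  · rw [fBCDeriv, min_eq_right h.le, hone]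
    refine (hasDerivAt_id s).congr_of_eventuallyEq ?_
    filter_upwards [Ioi_mem_nhds h] with x hx
    exact if_neg (not_le.2 hx)

theorem fBC_one_sub_sq_pos (hc : 0 < c) (hc1 : c < 1) {s : ℝ} (hs : -1 < s) :
    0 < 1 - min s c ^ 2 := by
  have h1 : -1 < min s c := lt_min hs (by linarith)
  have h2 : min s c < 1 := (min_le_right _ _).trans_lt hc1
  nlinarith

theorem fBCDeriv_continuousOn (hc : 0 < c) (hc1 : c < 1) :
    ContinuousOn (fBCDeriv b c) (Set.Ioi (-1)) := by
  unfold fBCDeriv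
  refine continuousOn_const.mul (ContinuousOn.div (by fun_prop) (by fun_prop) ?_)
  exact fun x hx => (Real.sqrt_pos.2 (fBC_one_sub_sq_pos hc hc1 hx)).ne'

theorem fBCDeriv_pos (hb : 0 < b) (hc : 0 < c) (hc1 : c < 1) {s : ℝ} (hs : 0 < s) :
    0 < fBCDeriv b c s :=
  mul_pos hb (div_pos (lt_min hs hc)
    (Real.sqrt_pos.2 (fBC_one_sub_sq_pos hc hc1 (by linarith))))

theorem fBCDeriv_mono (hb : 0 < b) (hc : 0 < c) (hc1 : c < 1) {s t : ℝ} (hs : 0 ≤ s)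
    (hst : s ≤ t) : fBCDeriv b c s ≤ fBCDeriv b c t := by
  have hm : min s c ≤ min t c := min_le_min_right c hst
  have h0 : 0 ≤ min s c := le_min hs hc.le
  refine mul_le_mul_of_nonneg_left (div_le_div₀ (h0.trans hm) hm
    (Real.sqrt_pos.2 (fBC_one_sub_sq_pos hc hc1 (by linarith))) ?_) hb.le
  exact Real.sqrt_le_sqrt (by nlinarith)

theorem fBCAux_properties (hb : 0 < b) (hc : 0 < c) (hc1 : c < 1) (hab : a ^ 2 = b ^ 2 + 1)
    (hac : a * c = 1) :
    ConvexOn ℝ (Set.Icc (0 : ℝ) 1) (fBCAux a b c) ∧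
    StrictMonoOn (fBCAux a b c) (Set.Icc (0 : ℝ) 1) ∧
    ContDiffOn ℝ 1 (fBCAux a b c) (Set.Icc (0 : ℝ) 1) ∧
    ∀ s ∈ Set.Icc (0 : ℝ) 1, s ≤ fBCAux a b c s := by
  have hd : ∀ s : ℝ, -1 < s → HasDerivAt (fBCAux a b c) (fBCDeriv b c s) s :=
    fun s hs => fBCAux_hasDerivAt hb hc hc1 hab hac hs
  have hcont : ContinuousOn (fBCAux a b c) (Set.Icc 0 1) :=
    fun x hx => (hd x (by linarith [hx.1])).continuousAt.continuousWithinAt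
  refine ⟨?_, ?_, ?_, ?_⟩
  · refine MonotoneOn.convexOn_of_deriv (convex_Icc 0 1) hcont ?_ ?_ <;> rw [interior_Icc]
    · exact fun x hx => (hd x (by linarith [hx.1])).differentiableAt.differentiableWithinAt
    · intro x hx y hy hxy
      rw [(hd x (by linarith [hx.1])).deriv, (hd y (by linarith [hy.1])).deriv]
      exact fBCDeriv_mono hb hc hc1 hx.1.le hxy
  · refine strictMonoOn_of_deriv_pos (convex_Icc 0 1) hcont fun x hx => ?_
    rw [interior_Icc] at hx
    rw [(hd x (by linarith [hx.1])).deriv]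
    exact fBCDeriv_pos hb hc hc1 hx.1
  -- `C¹` holds on the open set `(-1, ∞)`, which contains `[0, 1]`.
  · have h : ContDiffOn ℝ (0 + 1) (fBCAux a b c) (Set.Ioi (-1)) := by
      rw [contDiffOn_succ_iff_deriv_of_isOpen isOpen_Ioi]
      refine ⟨fun x hx => (hd x hx).differentiableAt.differentiableWithinAt, by simp, ?_⟩
      rw [contDiffOn_zero]
      exact (fBCDeriv_continuousOn hc hc1).congr fun x hx => (hd x hx).deriv
    rw [zero_add] at h
    exact h.mono fun x hx => Set.mem_Ioi.2 (by linarith [hx.1])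
  · intro s hs
    unfold fBCAux
    split_ifs with h
    · have ha : 1 < a := by nlinarith
      have hS : 0 ≤ 1 - s ^ 2 := by nlinarith [hs.1, hs.2]
      have hle : b * Real.sqrt (1 - s ^ 2) ≤ a - s := by
        refine le_of_sq_le_sq ?_ (by linarith [hs.2])
        rw [mul_pow, Real.sq_sqrt hS]
        nlinarith [sq_nonneg (a * s - 1)]
      linarith
    · exact le_rfl

end

/-- f is convex, strictly increasing and C¹ on [0,1], and f(s) ≥ s there. -/
theorem fBC_properties (τ : ℝ) (hτ : 1 < τ) :
    ConvexOn ℝ (Set.Icc (0 : ℝ) 1) (fBC τ) ∧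
    StrictMonoOn (fBC τ) (Set.Icc (0 : ℝ) 1) ∧
    ContDiffOn ℝ 1 (fBC τ) (Set.Icc (0 : ℝ) 1) ∧
    ∀ s ∈ Set.Icc (0 : ℝ) 1, s ≤ fBC τ s := by
  have h4 : 0 < τ ^ 4 - 1 := sub_pos.2 (one_lt_pow₀ hτ (by norm_num))
  have h5 : 0 < τ ^ 4 + 1 := by linarith
  have hτ0 : 0 < τ := by linarith
  have heq : fBC τ = fBCAux ((τ ^ 4 + 1) / (τ ^ 4 - 1)) (2 * τ ^ 2 / (τ ^ 4 - 1))
      ((τ ^ 4 - 1) / (τ ^ 4 + 1)) := by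
    funext s
    unfold fBC fBCAux
    congr 1
    ring
  rw [heq]
  refine fBCAux_properties (by positivity) (by positivity) ?_ ?_ ?_
  · rw [div_lt_one h5]; linarith
  · field_simp
    ring
  · field_simp
end

section
/- Let τ > 1 with τ² < 1 + √2, and let f be the associated function. Then {θ ∈ ℝ : f(|cos 2(θ + π/4)|) < |cos 2θ|} = ⋃_{j ∈ ℤ} ((4j − 1)π/8, (4j + 1)π/8). (Note that |cos 2(θ + π/4)| = |sin 2θ|.) -/
/-- If `s` and `c` are the two nonnegative coordinates of a point of the unit circle, the
function `fBC τ` may be replaced by the identity in the inequality `fBC τ s < c`. -/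
theorem fBC_lt_iff (τ : ℝ) (hτ : 1 < τ) (hτ2 : τ ^ 2 < 1 + Real.sqrt 2)
    (s c : ℝ) (hs : 0 ≤ s) (hc : 0 ≤ c) (hsc : s ^ 2 + c ^ 2 = 1) :
    fBC τ s < c ↔ s < c := by
  have hsqrt : Real.sqrt (1 - s ^ 2) = c := by
    rw [show 1 - s ^ 2 = c ^ 2 by linarith, Real.sqrt_sq hc]
  have hT1 : 1 < τ ^ 2 := by nlinarith
  have h4 : τ ^ 4 = (τ ^ 2) ^ 2 := by ring
  unfold fBC
  rw [hsqrt, h4]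
  generalize τ ^ 2 = T at *
  have hT : T ^ 2 - 1 < 2 * T := by
    nlinarith [Real.sq_sqrt (show (0 : ℝ) ≤ 2 by norm_num), Real.sqrt_nonneg 2]
  have hT2 : 0 < T ^ 2 - 1 := by nlinarith
  split_ifs with h
  · rw [le_div_iff₀ (by positivity)] at h
    have hsq : (s * (T ^ 2 + 1)) ^ 2 ≤ (T ^ 2 - 1) ^ 2 := by gcongr
    have hcT : 2 * T ≤ c * (T ^ 2 + 1) := by
      refine (sq_le_sq₀ (by linarith) (by positivity)).mp ?_
      have : (c * (T ^ 2 + 1)) ^ 2 = (T ^ 2 + 1) ^ 2 - (s * (T ^ 2 + 1)) ^ 2 := by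
        linear_combination (T ^ 2 + 1) ^ 2 * hsc
      nlinarith
    have hlt : s < c := by
      have : s * (T ^ 2 + 1) < c * (T ^ 2 + 1) := by linarith
      exact lt_of_mul_lt_mul_right this (by positivity)
    refine iff_of_true ?_ hlt
    rw [div_lt_iff₀ hT2]
    have h1 : 2 * T * (T ^ 2 - 1 + 2 * T) ≤ c * (T ^ 2 + 1) * (T ^ 2 - 1 + 2 * T) :=
      mul_le_mul_of_nonneg_right hcT (by linarith)
    have h2 : 0 < (T ^ 2 - 1) * (1 + 2 * T - T ^ 2) := mul_pos hT2 (by linarith)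
    have h3 : (T ^ 2 + 1) * (T ^ 2 + 1) < c * (T ^ 2 - 1 + 2 * T) * (T ^ 2 + 1) := by
      linarith
    have h4 := lt_of_mul_lt_mul_right h3 (by positivity)
    linarith
  · exact Iff.rfl

theorem cos_pos_iff_exists_int (x : ℝ) :
    0 < Real.cos x ↔ ∃ j : ℤ, |x - j * (2 * Real.pi)| < Real.pi / 2 := by
  have hpi := Real.pi_pos
  constructor
  · intro h
    refine ⟨round (x / (2 * Real.pi)), ?_⟩
    have hr := abs_sub_round (x / (2 * Real.pi))
    generalize round (x / (2 * Real.pi)) = j at *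
    have hle : |x - j * (2 * Real.pi)| ≤ Real.pi := by
      rw [show x - j * (2 * Real.pi) = (x / (2 * Real.pi) - j) * (2 * Real.pi) by field_simp,
        abs_mul, abs_of_pos (show 0 < 2 * Real.pi by positivity)]
      nlinarith
    rw [← Real.cos_sub_int_mul_two_pi x j, ← Real.cos_abs] at h
    by_contra! hge
    exact absurd h (not_lt.mpr (Real.cos_nonpos_of_pi_div_two_le_of_le hge (by linarith)))
  · rintro ⟨j, hj⟩
    rw [← Real.cos_sub_int_mul_two_pi x j]
    exact Real.cos_pos_of_mem_Ioo (abs_lt.mp hj)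

/-- For α = π/4 and τ² < 1 + √2, the set E₁ is the union over j ∈ ℤ of the
intervals ((4j−1)π/8, (4j+1)π/8). -/
theorem E1_for_alpha_pi_div_four (τ : ℝ) (hτ : 1 < τ)
    (hτ2 : τ ^ 2 < 1 + Real.sqrt 2) :
    {θ : ℝ | fBC τ |Real.cos (2 * (θ + Real.pi / 4))| < |Real.cos (2 * θ)|} =
      ⋃ j : ℤ, Set.Ioo ((4 * (j : ℝ) - 1) * Real.pi / 8)
        ((4 * (j : ℝ) + 1) * Real.pi / 8) := by
  ext θ
  have hsin : |Real.cos (2 * (θ + Real.pi / 4))| = |Real.sin (2 * θ)| := by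
    rw [show 2 * (θ + Real.pi / 4) = 2 * θ + Real.pi / 2 by ring, Real.cos_add_pi_div_two,
      abs_neg]
  have hcos : |Real.sin (2 * θ)| < |Real.cos (2 * θ)| ↔ 0 < Real.cos (4 * θ) := by
    rw [← sq_lt_sq, show 4 * θ = 2 * (2 * θ) by ring, Real.cos_two_mul' (2 * θ), sub_pos]
  rw [Set.mem_ofPred_eq, hsin, fBC_lt_iff τ hτ hτ2 _ _ (abs_nonneg _) (abs_nonneg _)
    (by rw [sq_abs, sq_abs, Real.sin_sq_add_cos_sq]), hcos, cos_pos_iff_exists_int, Set.mem_iUnion]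
  refine exists_congr fun j => ?_
  rw [abs_lt, Set.mem_Ioo]
  constructor <;> rintro ⟨h1, h2⟩ <;> constructor <;> linarith
end
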